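/- arXiv:1907.08185 — 7 statements merged into one kernel-verified Lean document; each statement's English description precedes it below -/
import Mathlib

section
/- For all constants ε, δ, γ ∈ (0,1) there exist a positive integer C and a positive integer N₀ such that for every even integer N ≥ N₀ there exists a family S₁, …, S_{N/2} of subsets of {1,…,N} with the following properties: (1) every set S_i has cardinality exactly C; (2) for every string x ∈ {0,1}^N, the fraction of indices i ∈ {1,…,N/2} with |avg(x|_{S_i}) − x̄| > ε is at most δ; (3) for every real η with 0 < η < (1−γ)/2 and every x ∈ {0,1}^N with x̄ ≥ 1 − η, the fraction of indices i ∈ {1,…,N/2} with avg(x|_{S_i}) < γ is at most η/2. -/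
/-!
Choose the `N / 2` sets independently and uniformly among the `C`-subsets of `Fin N`, and write `Z`
for the set of zeros of `x`. Both conclusions bound, for every `Z`, the number of indices whose set
meets `Z` in an atypical way.

* For a fixed `Z`, Chebyshev's inequality (`card_deviation_le`) makes an `e`-deviation of one set as
  unlikely as desired once `C` is large, so the probability that a `1 / d` fraction of the sets
  deviates is at most `(3 / 32) ^ (N / 2)`, which survives a union bound over all `2 ^ N` sets `Z`.
  This is the second conclusion. It also gives the third when `|Z| / N > 2 ^ (-r)`, because
  an average below `γ` is then a deviation by `(1 - γ) / 2` and `1 / d` may be taken at most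
  `2 ^ (-r) / 2`.
* For `k = |Z| ≤ 2 ^ (-r) * N` at most `k / 4` sets may have average below `γ`. Such a set contains
  at least `s + 9` points of `Z`, where `C = r * s`, an event of probability at most
  `2 ^ C * (k / N) ^ (s + 9) ≤ (k / N) ^ 9` (`card_large_inter_le`). The probability that more than
  `k / 4` sets do so is then at most `(k / N) ^ (2 * k) * exp k`, and summing over the `N.choose k`
  sets of size `k` and over `k ≥ 1` leaves a geometric series (`sum_weight_le`).

The order of choice matters: `r` depends only on `γ`, then `d` on `r` and `δ`, and `s` comes last.
All union bounds are carried out at once, through exponential moments, in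
`exists_fun_of_sum_lt_one`.
-/

open Finset

/-- The fraction of ones in the bits of `x` indexed by the finite set `S`. -/
noncomputable def avgOn {N : ℕ} (x : Fin N → Bool) (S : Finset (Fin N)) : ℝ :=
  (∑ i ∈ S, if x i then (1 : ℝ) else 0) / S.card

/-- The fraction of ones in the string `x ∈ {0,1}^N`. -/
noncomputable def frac {N : ℕ} (x : Fin N → Bool) : ℝ :=
  (∑ i, if x i then (1 : ℝ) else 0) / N

/-- Probabilistic method with an exponential moment. For `f` uniform in `Fin M → A` and `B j` of
density at most `q j` in `A`, the number of `i` with `f i ∈ B j` has `l j`-moment at most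
`exp (q j * l j * M)`; hence if the `w`-weighted sum of these bounds is below `1`, a single `f` keeps
every weighted term below `1`. A union bound over events is the case where `w j * l j ^ n ≥ 1`
whenever `n` is the count of a bad event. -/
lemma exists_fun_of_sum_lt_one {α ι : Type*} [Fintype ι] [DecidableEq α] (A : Finset α)
    (hA : A.Nonempty) (M : ℕ) (B : ι → Finset α) (hB : ∀ j, B j ⊆ A) (q l w : ι → ℝ)
    (hq : ∀ j, ((B j).card : ℝ) ≤ q j * A.card) (hl : ∀ j, 0 ≤ l j) (hw : ∀ j, 0 ≤ w j)
    (hsum : ∑ j, w j * Real.exp (q j * l j * M) < 1) :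
    ∃ f : Fin M → α, (∀ i, f i ∈ A) ∧
      ∀ j, w j * l j ^ (univ.filter fun i => f i ∈ B j).card < 1 := by
  have hApos : (0 : ℝ) < A.card := by exact_mod_cast hA.card_pos
  have key : ∀ j, ∑ f ∈ Fintype.piFinset (fun _ : Fin M => A),
      w j * l j ^ (univ.filter fun i => f i ∈ B j).card
      ≤ (A.card : ℝ) ^ M * (w j * Real.exp (q j * l j * M)) := by
    intro j
    have h1 : ∀ f : Fin M → α, l j ^ (univ.filter fun i => f i ∈ B j).card
        = ∏ i, if f i ∈ B j then l j else 1 := by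
      intro f
      simp [Finset.prod_ite]
    have h2 : ∑ a ∈ A, (if a ∈ B j then l j else 1) ≤ A.card * Real.exp (q j * l j) := by
      have h3 : ∑ a ∈ A, (if a ∈ B j then l j else 1)
          ≤ ∑ a ∈ A, ((if a ∈ B j then l j else 0) + 1) := by
        apply Finset.sum_le_sum
        intro a _
        split_ifs <;> linarith
      have h4 : ∑ a ∈ A, ((if a ∈ B j then l j else 0) + 1) = (B j).card * l j + A.card := by
        rw [Finset.sum_add_distrib, ← Finset.sum_filter, Finset.filter_mem_eq_inter,
          Finset.inter_eq_right.2 (hB j)]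
        simp
      have h5 := mul_le_mul_of_nonneg_right (hq j) (hl j)
      have h6 := mul_le_mul_of_nonneg_left (Real.add_one_le_exp (q j * l j)) hApos.le
      linarith
    rw [← Finset.mul_sum]
    simp_rw [h1]
    rw [Finset.sum_prod_piFinset (ι := Fin M) A (fun _ a => if a ∈ B j then l j else 1)]
    rw [Finset.prod_const, Finset.card_univ, Fintype.card_fin]
    have h7 : (∑ a ∈ A, (if a ∈ B j then l j else 1)) ^ M
        ≤ (A.card * Real.exp (q j * l j)) ^ M := by
      apply pow_le_pow_left₀ _ h2
      apply Finset.sum_nonneg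
      intro a _
      split_ifs
      exacts [hl j, zero_le_one]
    calc _ ≤ w j * (A.card * Real.exp (q j * l j)) ^ M := mul_le_mul_of_nonneg_left h7 (hw j)
      _ = _ := by rw [mul_pow, ← Real.exp_nat_mul, mul_comm (M : ℝ)]; ring
  have hlt : ∑ f ∈ Fintype.piFinset (fun _ : Fin M => A),
      ∑ j, w j * l j ^ (univ.filter fun i => f i ∈ B j).card
      < ∑ f ∈ Fintype.piFinset (fun _ : Fin M => A), (1 : ℝ) := by
    rw [Finset.sum_comm]
    calc _ ≤ ∑ j, (A.card : ℝ) ^ M * (w j * Real.exp (q j * l j * M)) :=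
          Finset.sum_le_sum fun j _ => key j
      _ < (A.card : ℝ) ^ M := by
          rw [← Finset.mul_sum]
          exact mul_lt_of_lt_one_right (pow_pos hApos M) hsum
      _ = _ := by simp [Fintype.card_piFinset]
  obtain ⟨f, hf, hf1⟩ := Finset.exists_lt_of_sum_lt hlt
  refine ⟨f, fun i => Fintype.mem_piFinset.1 hf i, fun j => lt_of_le_of_lt ?_ hf1⟩
  exact Finset.single_le_sum (f := fun j => w j * l j ^ (univ.filter fun i => f i ∈ B j).card)
    (fun j _ => mul_nonneg (hw j) (pow_nonneg (hl j) _)) (Finset.mem_univ j)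

lemma card_filter_superset {N : ℕ} (T : Finset (Fin N)) (C : ℕ) (h : T.card ≤ C) :
    ((powersetCard C (univ : Finset (Fin N))).filter (T ⊆ ·)).card
      = (N - T.card).choose (C - T.card) := by
  have hc : (Tᶜ : Finset (Fin N)).card = N - T.card := by simp [Finset.card_compl]
  rw [← hc, ← Finset.card_powersetCard]
  apply Finset.card_nbij' (fun S => S \ T) (fun U => U ∪ T)
  · intro S hS
    simp only [coe_filter, mem_powersetCard, Set.mem_ofPred_eq, mem_coe] at hS ⊢
    refine ⟨fun a ha => by simp at ha ⊢; exact ha.2, ?_⟩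
    rw [Finset.card_sdiff_of_subset hS.2, hS.1.2]
  · intro U hU
    simp only [coe_filter, mem_powersetCard, Set.mem_ofPred_eq, mem_coe] at hU ⊢
    refine ⟨⟨subset_univ _, ?_⟩, subset_union_right⟩
    rw [Finset.card_union_of_disjoint, hU.2]
    · omega
    · exact Finset.disjoint_left.2 fun a ha => by simpa using hU.1 ha
  · intro S hS
    simp only [coe_filter, Set.mem_ofPred_eq] at hS
    exact Finset.sdiff_union_of_subset hS.2
  · intro U hU
    simp only [mem_powersetCard, mem_coe] at hU
    apply Finset.union_sdiff_cancel_right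
    exact Finset.disjoint_left.2 fun a ha => by simpa using hU.1 ha

/-- The binomial moments of the hypergeometric distribution, with denominators cleared:
double counting of pairs `T ⊆ S ∩ Z` with `T.card = m`. -/
lemma sum_choose_card_inter {N : ℕ} (Z : Finset (Fin N)) (C m : ℕ) (hm : m ≤ C) :
    (∑ S ∈ powersetCard C (univ : Finset (Fin N)), (S ∩ Z).card.choose m) * N.choose m
      = Z.card.choose m * C.choose m * N.choose C := by
  have h1 : ∑ S ∈ powersetCard C (univ : Finset (Fin N)), (S ∩ Z).card.choose m
      = Z.card.choose m * (N - m).choose (C - m) := by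
    have h2 : ∀ S : Finset (Fin N), (S ∩ Z).card.choose m
        = ((powersetCard m Z).filter (· ⊆ S)).card := by
      intro S
      rw [← Finset.card_powersetCard]
      congr 1
      ext T
      simp only [mem_powersetCard, subset_inter_iff, mem_filter]
      tauto
    simp_rw [h2]
    refine (Finset.sum_card_bipartiteAbove_eq_sum_card_bipartiteBelow
      (fun (S T : Finset (Fin N)) => T ⊆ S)).trans ?_
    rw [← Finset.card_powersetCard, ← smul_eq_mul, ← Finset.sum_const]
    apply Finset.sum_congr rfl
    intro T hT
    rw [← (mem_powersetCard.1 hT).2]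
    exact card_filter_superset T C ((mem_powersetCard.1 hT).2 ▸ hm)
  rw [h1, mul_assoc, mul_assoc, mul_comm _ (N.choose m), ← Nat.choose_mul hm, mul_comm (N.choose C)]

lemma choose_mul_pow_le {k N : ℕ} (h : k ≤ N) (m : ℕ) :
    k.choose m * N ^ m ≤ N.choose m * k ^ m := by
  induction m with
  | zero => simp
  | succ m ih =>
    have h1 : (k - m) * N ≤ (N - m) * k := by
      rw [Nat.sub_mul, Nat.sub_mul, mul_comm k N]
      exact Nat.sub_le_sub_left (Nat.mul_le_mul_left m h) _
    have h2 := Nat.choose_succ_right_eq k m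
    have h3 := Nat.choose_succ_right_eq N m
    have h4 := Nat.mul_le_mul ih h1
    refine Nat.le_of_mul_le_mul_right (c := m + 1) ?_ (Nat.succ_pos m)
    calc k.choose (m+1) * N ^ (m+1) * (m+1) = (k.choose (m+1) * (m+1)) * N ^ m * N := by ring
      _ = k.choose m * N ^ m * ((k - m) * N) := by rw [h2]; ring
      _ ≤ _ := h4
      _ = (N.choose (m+1) * (m+1)) * k ^ m * k := by rw [h3]; ring
      _ = _ := by ring

/-- For a random `C`-set `S`, `P(|S ∩ Z| ≥ m) ≤ 2 ^ C * (|Z| / N) ^ m`, by Markov's inequality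
applied to the `m`-th binomial moment of `|S ∩ Z|`. Useful when `|Z| / N` is small. -/
lemma card_large_inter_le {N : ℕ} (hN : 0 < N) (Z : Finset (Fin N)) (C m : ℕ) (hm : m ≤ C)
    (hC : C ≤ N) :
    (((powersetCard C (univ : Finset (Fin N))).filter (fun S => m ≤ (S ∩ Z).card)).card : ℝ)
      ≤ 2 ^ C * ((Z.card : ℝ) / N) ^ m * N.choose C := by
  have h1 : ((powersetCard C (univ : Finset (Fin N))).filter (fun S => m ≤ (S ∩ Z).card)).card
      ≤ ∑ S ∈ powersetCard C (univ : Finset (Fin N)), (S ∩ Z).card.choose m := by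
    rw [Finset.card_filter]
    apply Finset.sum_le_sum
    intro S _
    split_ifs with h
    · exact Nat.choose_pos h
    · exact Nat.zero_le _
  have hk : Z.card ≤ N := by simpa using Finset.card_le_univ Z
  have h2 := sum_choose_card_inter Z C m hm
  have h3 := choose_mul_pow_le hk m
  set E := ∑ S ∈ powersetCard C (univ : Finset (Fin N)), (S ∩ Z).card.choose m
  have h5 : E * N ^ m ≤ 2 ^ C * Z.card ^ m * N.choose C := by
    refine Nat.le_of_mul_le_mul_right (c := N.choose m) ?_ (Nat.choose_pos (hm.trans hC))
    calc E * N ^ m * N.choose m = (E * N.choose m) * N ^ m := by ring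
      _ = (Z.card.choose m * N ^ m) * C.choose m * N.choose C := by rw [h2]; ring
      _ ≤ (N.choose m * Z.card ^ m) * 2 ^ C * N.choose C := by
          gcongr
          exact Nat.choose_le_two_pow C m
      _ = _ := by ring
  have h6 : (E : ℝ) * N ^ m ≤ 2 ^ C * Z.card ^ m * N.choose C := by exact_mod_cast h5
  have hNm : (0 : ℝ) < (N : ℝ) ^ m := by positivity
  calc _ ≤ (E : ℝ) := by exact_mod_cast h1
    _ ≤ 2 ^ C * Z.card ^ m * N.choose C / N ^ m := by rwa [le_div_iff₀ hNm]
    _ = _ := by rw [div_pow]; ring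

/-- Chebyshev's inequality for the density of `Z` on a random `C`-set, the variance of `|S ∩ Z|`
being at most `C`. -/
lemma card_deviation_le {N : ℕ} (hN : 2 ≤ N) (Z : Finset (Fin N)) (C : ℕ) (hC2 : 2 ≤ C)
    (e : ℝ) (he : 0 < e) :
    (((powersetCard C (univ : Finset (Fin N))).filter
      (fun S => e < |((S ∩ Z).card : ℝ) / C - (Z.card : ℝ) / N|)).card : ℝ)
      ≤ 1 / (e ^ 2 * C) * N.choose C := by
  have hk : Z.card ≤ N := by simpa using Finset.card_le_univ Z
  have h1 := sum_choose_card_inter Z C 1 (by omega)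
  have h2 := sum_choose_card_inter Z C 2 hC2
  have hc0 : (0 : ℝ) < C := by exact_mod_cast (by omega : 0 < C)
  have hn1 : (2 : ℝ) ≤ N := by exact_mod_cast hN
  have hkN : (Z.card : ℝ) ≤ N := by exact_mod_cast hk
  have hc2 : (2 : ℝ) ≤ C := by exact_mod_cast hC2
  simp only [Nat.choose_one_right] at h1
  replace h1 : (∑ S ∈ powersetCard C (univ : Finset (Fin N)), ((S ∩ Z).card : ℝ)) * N
      = Z.card * C * N.choose C := by exact_mod_cast h1
  replace h2 : (∑ S ∈ powersetCard C (univ : Finset (Fin N)), (((S ∩ Z).card.choose 2 : ℕ) : ℝ))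
      * (N.choose 2 : ℕ) = (Z.card.choose 2 : ℕ) * (C.choose 2 : ℕ) * N.choose C := by
    exact_mod_cast h2
  simp only [Nat.cast_choose_two] at h2
  set K : ℝ := ((N.choose C : ℕ) : ℝ) with hK
  have hK0 : 0 ≤ K := Nat.cast_nonneg _
  set k : ℝ := (Z.card : ℝ) with hkdef
  have hk0 : 0 ≤ k := Nat.cast_nonneg _
  set E1 := ∑ S ∈ powersetCard C (univ : Finset (Fin N)), ((S ∩ Z).card : ℝ)
  set E2 := ∑ S ∈ powersetCard C (univ : Finset (Fin N)),
    (((S ∩ Z).card : ℝ) * ((S ∩ Z).card - 1) / 2)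
  set p : ℝ := k / N with hp
  have hp0 : 0 ≤ p := by positivity
  have hkp : k = p * N := by rw [hp]; field_simp
  have e1 : E1 = p * C * K := by
    have : (N : ℝ) ≠ 0 := by linarith
    apply mul_right_cancel₀ this
    rw [h1, hkp]; ring
  have e2 : 2 * E2 ≤ p ^ 2 * (C * (C - 1)) * K := by
    have hpos : (0 : ℝ) < N * (N - 1) / 2 := by
      have : (0 : ℝ) < N - 1 := by linarith
      positivity
    refine le_of_mul_le_mul_right ?_ hpos
    have hp1 : p ≤ 1 := by rw [hp]; exact div_le_one_of_le₀ hkN (by linarith)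
    have : 2 * E2 * (N * (N - 1) / 2) = k * (k - 1) * (C * (C - 1) * K) / 2 := by
      rw [mul_assoc, h2]; ring
    rw [this]
    have h7 : k * (k - 1) ≤ p ^ 2 * (N * (N - 1)) := by
      rw [hkp]; nlinarith [mul_nonneg (mul_nonneg hp0 (by linarith : (0:ℝ) ≤ N)) (sub_nonneg.2 hp1)]
    have h8 : (0:ℝ) ≤ C * (C - 1) * K := by
      have : (0 : ℝ) ≤ C - 1 := by linarith
      positivity
    nlinarith [mul_le_mul_of_nonneg_right h7 h8]
  have var : ∑ S ∈ powersetCard C (univ : Finset (Fin N)), (((S ∩ Z).card : ℝ) - C * p) ^ 2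
      ≤ C * K := by
    have : ∑ S ∈ powersetCard C (univ : Finset (Fin N)), (((S ∩ Z).card : ℝ) - C * p) ^ 2
        = 2 * E2 + (1 - 2 * C * p) * E1 + (C * p) ^ 2 * K := by
      have hcard : K = ∑ S ∈ powersetCard C (univ : Finset (Fin N)), (1 : ℝ) := by
        simp [hK]
      rw [hcard, Finset.mul_sum, Finset.mul_sum, Finset.mul_sum, ← Finset.sum_add_distrib,
        ← Finset.sum_add_distrib]
      apply Finset.sum_congr rfl
      intro S _
      ring
    rw [this, e1]
    have : p - p ^ 2 ≤ 1 := by nlinarith [sq_nonneg (p - 1 / 2)]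
    nlinarith [mul_le_mul_of_nonneg_right this (mul_nonneg hc0.le hK0)]
  have hcheb : (((powersetCard C (univ : Finset (Fin N))).filter
      (fun S => e < |((S ∩ Z).card : ℝ) / C - p|)).card : ℝ) * (e * C) ^ 2 ≤
      ∑ S ∈ powersetCard C (univ : Finset (Fin N)), (((S ∩ Z).card : ℝ) - C * p) ^ 2 := by
    rw [← nsmul_eq_mul, ← Finset.sum_const, Finset.sum_filter]
    apply Finset.sum_le_sum
    intro S _
    split_ifs with h
    · have : ((S ∩ Z).card : ℝ) - C * p = C * (((S ∩ Z).card : ℝ) / C - p) := by field_simp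
      rw [this, mul_pow, mul_pow, mul_comm]
      apply mul_le_mul_of_nonneg_left _ (by positivity)
      rw [← sq_abs (_ - _)]
      exact pow_le_pow_left₀ he.le h.le 2
    · positivity
  have := hcheb.trans var
  rw [div_mul_eq_mul_div, one_mul, le_div_iff₀ (by positivity)]
  refine le_of_mul_le_mul_right ?_ hc0
  nlinarith

lemma avgOn_eq {N : ℕ} (x : Fin N → Bool) (S : Finset (Fin N)) (hS : 0 < S.card) :
    avgOn x S = 1 - ((S ∩ univ.filter fun i => x i = false).card : ℝ) / S.card := by
  have h : ∑ i ∈ S, (if x i then (1 : ℝ) else 0)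
      = S.card - (S ∩ univ.filter fun i => x i = false).card := by
    rw [Finset.inter_filter, Finset.inter_univ, Finset.card_filter, Nat.cast_sum, Finset.card_eq_sum_ones,
      Nat.cast_sum, ← Finset.sum_sub_distrib]
    apply Finset.sum_congr rfl
    intro i _
    cases x i <;> simp
  have h0 : (S.card : ℝ) ≠ 0 := by exact_mod_cast hS.ne'
  rw [avgOn, h, sub_div, div_self h0]

lemma frac_eq {N : ℕ} (x : Fin N → Bool) (hN : 0 < N) :
    frac x = 1 - ((univ.filter fun i => x i = false).card : ℝ) / N := by
  have := avgOn_eq x univ (by simpa using hN)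
  simpa [avgOn, frac] using this

/-- The bound `N.choose k ≤ N ^ k / k!` together with `k ^ k / k! ≤ exp k` leaves
`(exp 2 * k / N) ^ k`, and `exp 2 / 2 ^ 7 ≤ 1 / 8`. -/
lemma choose_mul_weight_le {N k r : ℕ} (hk : 0 < k) (hr : 7 ≤ r) (hkN : k * 2 ^ r ≤ N) :
    (N.choose k : ℝ) * ((((k : ℝ) / N) ^ 2) ^ k * Real.exp k) ≤ (1 / 8) ^ k := by
  have hN : 0 < N := lt_of_lt_of_le (by positivity) hkN
  have h1 : (N.choose k : ℝ) ≤ (N : ℝ) ^ k / (k.factorial : ℝ) := Nat.choose_le_pow_div k N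
  have h2 : (k : ℝ) ^ k / (k.factorial : ℝ) ≤ Real.exp k :=
    Real.pow_div_factorial_le_exp (k : ℝ) (Nat.cast_nonneg k) k
  have hk0 : (0 : ℝ) < k := by exact_mod_cast hk
  have hN0 : (0 : ℝ) < N := by exact_mod_cast hN
  have h3 : (k : ℝ) / N ≤ 1 / 128 := by
    rw [div_le_div_iff₀ hN0 (by norm_num)]
    have : k * 2 ^ 7 ≤ N := (Nat.mul_le_mul_left k (Nat.pow_le_pow_right (by norm_num) hr)).trans hkN
    have : (k : ℝ) * 2 ^ 7 ≤ N := by exact_mod_cast this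
    linarith
  have h4 : Real.exp k = Real.exp 1 ^ k := by rw [← Real.exp_nat_mul, mul_one]
  have he := Real.exp_one_lt_three
  have he0 := Real.exp_pos 1
  calc (N.choose k : ℝ) * ((((k : ℝ) / N) ^ 2) ^ k * Real.exp k)
      ≤ (N : ℝ) ^ k / (k.factorial : ℝ) * ((((k : ℝ) / N) ^ 2) ^ k * Real.exp k) := by gcongr
    _ = (k : ℝ) ^ k / (k.factorial : ℝ) * (((k : ℝ) / N) ^ k * Real.exp k) := by
        rw [← pow_mul, mul_comm 2 k, pow_mul, sq, div_pow]; field_simp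
    _ ≤ Real.exp k * (((k : ℝ) / N) ^ k * Real.exp k) := by gcongr
    _ = (Real.exp 1 ^ 2 * ((k : ℝ) / N)) ^ k := by rw [h4, mul_pow, ← pow_mul, mul_comm 2 k, pow_mul]; ring
    _ ≤ (1 / 8) ^ k := by
        apply pow_le_pow_left₀ (by positivity)
        have : Real.exp 1 ^ 2 ≤ 9 := by nlinarith
        calc _ ≤ 9 * (1 / 128 : ℝ) := by gcongr
          _ ≤ _ := by norm_num

lemma sum_weight_le {N r : ℕ} (hr : 7 ≤ r) :
    ∑ Z : Finset (Fin N), (if 0 < Z.card ∧ Z.card * 2 ^ r ≤ N then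
      (((Z.card : ℝ) / N) ^ 2) ^ Z.card * Real.exp Z.card else 0) ≤ 1 / 7 := by
  have h := Finset.sum_powerset_apply_card (f := fun k : ℕ => if 0 < k ∧ k * 2 ^ r ≤ N then
      (((k : ℝ) / N) ^ 2) ^ k * Real.exp k else 0) (x := (univ : Finset (Fin N)))
  rw [Finset.powerset_univ, Finset.card_univ, Fintype.card_fin] at h
  rw [h]
  calc _ ≤ ∑ k ∈ range (N + 1), (if k = 0 then 0 else (1 / 8 : ℝ) ^ k) := by
        apply Finset.sum_le_sum
        intro k _
        rw [nsmul_eq_mul]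
        by_cases h0 : k = 0
        · simp [h0]
        · rw [if_neg h0]
          split_ifs with hk
          · exact choose_mul_weight_le hk.1 hr hk.2
          · simp
    _ = ∑ k ∈ range N, (1 / 8 : ℝ) ^ (k + 1) := by
        rw [Finset.sum_range_succ']; simp
    _ ≤ 1 / 7 := by
        simp_rw [pow_succ]
        rw [← Finset.sum_mul, geom_sum_eq (by norm_num)]
        have h0 : (0 : ℝ) ≤ (1 / 8) ^ N := by positivity
        generalize (1 / 8 : ℝ) ^ N = t at h0 ⊢
        have h1 : (t - 1) / (1 / 8 - 1) * (1 / 8) = (1 - t) / 7 := by ring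
        rw [h1]
        linarith

/-- The random family. The integers `d` and `2 ^ r` are the inverses of the allowed fraction of
`e`-deviating sets and of the density below which `Z` counts as sparse; the sets have size `r * s`,
so that `2 ^ (r * s)` is absorbed by the factor `(|Z| / N) ^ s` of the tail bound for sparse `Z`. -/
lemma exists_family {r s d M : ℕ} {e : ℝ} (he : 0 < e) (hr : 7 ≤ r) (hs : 9 ≤ s)
    (hd : (32 : ℝ) ^ d ≤ e ^ 2 * (r * s : ℕ)) (hM : 0 < M) (hN : r * s ≤ 2 * M) :
    ∃ S : Fin M → Finset (Fin (2 * M)), (∀ i, (S i).card = r * s) ∧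
      (∀ Z : Finset (Fin (2 * M)), d * (univ.filter fun i =>
        e < |((S i ∩ Z).card : ℝ) / (r * s : ℕ) - (Z.card : ℝ) / (2 * M : ℕ)|).card ≤ M) ∧
      (∀ Z : Finset (Fin (2 * M)), 0 < Z.card → Z.card * 2 ^ r ≤ 2 * M →
        4 * (univ.filter fun i => s + 9 ≤ (S i ∩ Z).card).card ≤ Z.card) := by
  classical
  set C := r * s with hC
  set N := 2 * M with hNdef
  have hCs : s + 9 ≤ C := by nlinarith
  have hN0 : 0 < N := by omega
  have hNr : (0 : ℝ) < N := by exact_mod_cast hN0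
  have hC0 : (0 : ℝ) < C := by exact_mod_cast (by omega : 0 < C)
  let A := powersetCard C (univ : Finset (Fin N))
  have hAc : A.card = N.choose C := by simp [A]
  have hA : A.Nonempty := by
    rw [← Finset.card_pos, hAc]; exact Nat.choose_pos hN
  -- The left summand carries the deviation events, with base `32` chosen to beat the `2 ^ (2 * M)`
  -- choices of `Z` and the factor `exp M`. The right summand carries the sparse `Z`, with base
  -- `(N / |Z|) ^ 2`, and weight `0` for all other `Z`.
  obtain ⟨f, hfA, hf⟩ := exists_fun_of_sum_lt_one (ι := Finset (Fin N) ⊕ Finset (Fin N)) A hA M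
    (Sum.elim (fun Z => A.filter (fun S => e < |((S ∩ Z).card : ℝ) / C - (Z.card : ℝ) / N|))
      (fun Z => A.filter (fun S => s + 9 ≤ (S ∩ Z).card)))
    (by rintro (Z | Z) <;> exact Finset.filter_subset _ _)
    (Sum.elim (fun _ => 1 / (e ^ 2 * C)) (fun Z => 2 ^ C * ((Z.card : ℝ) / N) ^ (s + 9)))
    (Sum.elim (fun _ => 32 ^ d) (fun Z => (((N : ℝ) / Z.card) ^ 2) ^ 4))
    (Sum.elim (fun _ => (32 ^ M)⁻¹) (fun Z => if 0 < Z.card ∧ Z.card * 2 ^ r ≤ N then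
      (((Z.card : ℝ) / N) ^ 2) ^ Z.card else 0))
    (by
      rintro (Z | Z)
      · rw [hAc]; exact card_deviation_le (by omega) Z C (by omega) e he
      · rw [hAc]; exact card_large_inter_le hN0 Z C (s + 9) hCs hN)
    (by rintro (Z | Z) <;> simp only [Sum.elim_inl, Sum.elim_inr] <;> positivity)
    (by rintro (Z | Z) <;> simp only [Sum.elim_inl, Sum.elim_inr] <;> [positivity; split_ifs] <;>
          positivity)
    (by
      rw [Fintype.sum_sum_type]
      simp only [Sum.elim_inl, Sum.elim_inr]
      have s1 : ∑ Z : Finset (Fin N), ((32 : ℝ) ^ M)⁻¹ * Real.exp (1 / (e ^ 2 * C) * 32 ^ d * M)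
          ≤ 3 / 8 := by
        have hq : 1 / (e ^ 2 * C) * 32 ^ d ≤ 1 := by
          rw [one_div_mul_eq_div]; exact div_le_one_of_le₀ hd (by positivity)
        have hexp : Real.exp (1 / (e ^ 2 * C) * 32 ^ d * M) ≤ 3 ^ M := by
          calc _ ≤ Real.exp (M * 1) := by
                rw [mul_comm (M : ℝ)]; gcongr
            _ = Real.exp 1 ^ M := Real.exp_nat_mul _ _
            _ ≤ 3 ^ M := pow_le_pow_left₀ (Real.exp_pos 1).le Real.exp_one_lt_three.le M
        rw [Finset.sum_const, Finset.card_univ, Fintype.card_finset, Fintype.card_fin, nsmul_eq_mul]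
        calc _ ≤ ((2 ^ N : ℕ) : ℝ) * (((32 : ℝ) ^ M)⁻¹ * 3 ^ M) := by gcongr
          _ = (3 / 8 : ℝ) ^ M := by
              rw [hNdef]; push_cast
              rw [pow_mul, ← inv_pow, ← mul_pow, ← mul_pow]; norm_num
          _ ≤ (3 / 8 : ℝ) ^ 1 := pow_le_pow_of_le_one (by norm_num) (by norm_num) hM
          _ = _ := pow_one _
      have s2 : ∑ Z : Finset (Fin N), (if 0 < Z.card ∧ Z.card * 2 ^ r ≤ N then
          (((Z.card : ℝ) / N) ^ 2) ^ Z.card else 0) *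
          Real.exp (2 ^ C * ((Z.card : ℝ) / N) ^ (s + 9) * (((N : ℝ) / Z.card) ^ 2) ^ 4 * M)
          ≤ 1 / 7 := by
        refine le_trans (Finset.sum_le_sum fun Z _ => ?_) (sum_weight_le (N := N) hr)
        split_ifs with h
        · apply mul_le_mul_of_nonneg_left _ (by positivity)
          apply Real.exp_le_exp.2
          have hk0 : (0 : ℝ) < Z.card := by exact_mod_cast h.1
          have hkr : (Z.card : ℝ) * 2 ^ r ≤ N := by exact_mod_cast h.2
          set k : ℝ := (Z.card : ℝ)
          have hMN : (M : ℝ) = N / 2 := by rw [hNdef]; push_cast; ring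
          have h1 : 2 ^ C * (k / N) ^ s ≤ 1 := by
            rw [hC, pow_mul, ← mul_pow]
            apply pow_le_one₀ (by positivity)
            rw [← mul_div_assoc, div_le_one hNr]
            linarith
          calc 2 ^ C * (k / N) ^ (s + 9) * (((N : ℝ) / k) ^ 2) ^ 4 * M
              = (2 ^ C * (k / N) ^ s) * (k / 2) := by
                rw [hMN, pow_add]; field_simp
            _ ≤ 1 * (k / 2) := by gcongr
            _ ≤ k := by linarith
        · simp
      calc _ ≤ (3 / 8 : ℝ) + 1 / 7 := add_le_add s1 s2
        _ < 1 := by norm_num)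
  have hfc : ∀ i, f i ∈ A := hfA
  refine ⟨f, fun i => (mem_powersetCard.1 (hfA i)).2, ?_, ?_⟩
  · intro Z
    have := hf (Sum.inl Z)
    simp only [Sum.elim_inl, mem_filter, hfc, true_and] at this
    by_contra! hlt
    refine absurd this (not_lt.2 ?_)
    rw [← pow_mul, inv_mul_eq_div, one_le_div (by positivity)]
    exact pow_le_pow_right₀ (by norm_num) hlt.le
  · intro Z hZ hZr
    have := hf (Sum.inr Z)
    simp only [Sum.elim_inr, mem_filter, hfc, true_and] at this
    rw [if_pos ⟨hZ, hZr⟩] at this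
    by_contra! hlt
    refine absurd this (not_lt.2 ?_)
    have hk0 : (0 : ℝ) < Z.card := by exact_mod_cast hZ
    have hkN : (Z.card : ℝ) ≤ N := by
      exact_mod_cast (Nat.le_mul_of_pos_right _ (by positivity)).trans hZr
    rw [← pow_mul _ 4]
    have h1 : 1 ≤ ((N : ℝ) / Z.card) ^ 2 := one_le_pow₀ ((one_le_div hk0).2 hkN)
    calc (1 : ℝ) = (((Z.card : ℝ) / N) ^ 2) ^ Z.card * (((N : ℝ) / Z.card) ^ 2) ^ Z.card := by
          rw [← mul_pow, ← mul_pow, div_mul_div_cancel₀ hNr.ne', div_self hk0.ne']; simp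
      _ ≤ _ := by gcongr

open Classical in
theorem stmt_0 :
    ∀ ε δ γ : ℝ, ε ∈ Set.Ioo (0 : ℝ) 1 → δ ∈ Set.Ioo (0 : ℝ) 1 → γ ∈ Set.Ioo (0 : ℝ) 1 →
    ∃ C N₀ : ℕ, 0 < C ∧ 0 < N₀ ∧
      ∀ N : ℕ, N₀ ≤ N → 2 ∣ N →
        ∃ S : Fin (N / 2) → Finset (Fin N),
          (∀ i, (S i).card = C) ∧
          (∀ x : Fin N → Bool,
            ((univ.filter (fun i : Fin (N / 2) => |avgOn x (S i) - frac x| > ε)).card : ℝ)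
              / ((N / 2 : ℕ) : ℝ) ≤ δ) ∧
          (∀ η : ℝ, 0 < η → η < (1 - γ) / 2 →
            ∀ x : Fin N → Bool, 1 - η ≤ frac x →
              ((univ.filter (fun i : Fin (N / 2) => avgOn x (S i) < γ)).card : ℝ)
                / ((N / 2 : ℕ) : ℝ) ≤ η / 2) := by
  intro ε δ γ hε hδ hγ
  set c := 1 - γ with hc
  have hc0 : 0 < c := by rw [hc]; linarith [hγ.2]
  set e := min ε (c / 2) with he
  have he0 : 0 < e := lt_min hε.1 (by linarith)
  obtain ⟨r, hr⟩ := exists_nat_ge (max 7 (2 / c))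
  have hr7 : 7 ≤ r := by exact_mod_cast (le_max_left _ _).trans hr
  have hrc : 2 ≤ c * r := by
    have := (le_max_right _ _).trans hr
    rw [div_le_iff₀ hc0] at this
    linarith
  obtain ⟨d, hd⟩ := exists_nat_ge (max (1 / δ) (2 ^ (r + 1)))
  have hdδ : 1 ≤ d * δ := by
    have := (le_max_left _ _).trans hd
    rwa [div_le_iff₀ hδ.1] at this
  have hdr : (2 : ℝ) ^ (r + 1) ≤ d := (le_max_right _ _).trans hd
  have hd0 : (0 : ℝ) < d := lt_of_lt_of_le (by positivity) hdr
  obtain ⟨s, hs⟩ := exists_nat_ge (max 9 (32 ^ d / e ^ 2))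
  have hs9 : 9 ≤ s := by exact_mod_cast (le_max_left _ _).trans hs
  have hse : (32 : ℝ) ^ d ≤ e ^ 2 * (r * s : ℕ) := by
    have := (le_max_right _ _).trans hs
    rw [div_le_iff₀ (by positivity)] at this
    have h1 : (1 : ℝ) ≤ r := by exact_mod_cast (by omega : 1 ≤ r)
    push_cast
    nlinarith [mul_le_mul_of_nonneg_right h1 (by positivity : (0 : ℝ) ≤ s * e ^ 2)]
  have hC0 : 0 < r * s := Nat.mul_pos (by omega) (by omega)
  refine ⟨r * s, r * s, hC0, hC0, ?_⟩
  rintro _ hN ⟨M, rfl⟩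
  have hM : 0 < M := by omega
  have hM2 : 2 * M / 2 = M := by omega
  rw [hM2]
  obtain ⟨S, hS, hdev, hsmall⟩ := exists_family he0 hr7 hs9 hse hM hN
  have hMr : (0 : ℝ) < M := by exact_mod_cast hM
  have hCr : (0 : ℝ) < (r * s : ℕ) := by exact_mod_cast hC0
  have havg : ∀ x i, avgOn x (S i) = 1 - ((S i ∩ univ.filter fun i => x i = false).card : ℝ)
      / (r * s : ℕ) := by
    intro x i
    rw [avgOn_eq x (S i) (by rw [hS]; exact hC0), hS]
  have hfrac : ∀ x : Fin (2 * M) → Bool, frac x = 1 -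
      ((univ.filter fun i => x i = false).card : ℝ) / (2 * M : ℕ) := fun x =>
    frac_eq x (by omega)
  have hdev' : ∀ x : Fin (2 * M) → Bool,
      ((univ.filter fun i => e < |avgOn x (S i) - frac x|).card : ℝ) ≤ M / d := by
    intro x
    rw [le_div_iff₀ hd0]
    have := hdev (univ.filter fun i => x i = false)
    have h2 : ∀ i, |avgOn x (S i) - frac x| =
        |((S i ∩ univ.filter fun i => x i = false).card : ℝ) / (r * s : ℕ)
          - ((univ.filter fun i => x i = false).card : ℝ) / (2 * M : ℕ)| := by
      intro i
      rw [havg, hfrac, abs_sub_comm]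
      congr 1
      ring
    simp_rw [h2]
    rw [mul_comm]
    exact_mod_cast this
  refine ⟨S, hS, ?_, ?_⟩
  · intro x
    rw [div_le_iff₀ hMr]
    have hle : (univ.filter fun i => |avgOn x (S i) - frac x| > ε).card
        ≤ (univ.filter fun i => e < |avgOn x (S i) - frac x|).card := by
      apply Finset.card_le_card
      intro i
      simp only [mem_filter, mem_univ, true_and]
      exact fun h => lt_of_le_of_lt (min_le_left _ _) h
    calc _ ≤ ((univ.filter fun i => e < |avgOn x (S i) - frac x|).card : ℝ) := by exact_mod_cast hle
      _ ≤ M / d := hdev' x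
      _ ≤ δ * M := by rw [div_le_iff₀ hd0]; nlinarith
  · intro η hη hηc x hx
    rw [div_le_iff₀ hMr]
    set Z := univ.filter fun i => x i = false with hZ
    have hkη : (Z.card : ℝ) ≤ η * (2 * M) := by
      rw [hfrac] at hx
      have : (Z.card : ℝ) / (2 * M : ℕ) ≤ η := by linarith
      rw [div_le_iff₀ (by positivity)] at this
      exact_mod_cast this
    -- Sparse sets of zeros use the bound `|Z| / 4`. Otherwise `η` exceeds `2 ^ (-r)`, and an average
    -- below `γ` deviates from the mean by more than `c / 2`, so the deviation bound is enough.
    by_cases hlarge : Z.card * 2 ^ r ≤ 2 * M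
    · have hle : (univ.filter fun i => avgOn x (S i) < γ).card
          ≤ (univ.filter fun i => s + 9 ≤ (S i ∩ Z).card).card := by
        apply Finset.card_le_card
        intro i
        simp only [mem_filter, mem_univ, true_and]
        intro h
        rw [havg] at h
        have h1 : c < ((S i ∩ Z).card : ℝ) / (r * s : ℕ) := by linarith
        rw [lt_div_iff₀ hCr] at h1
        push_cast at h1
        have hs9r : (9 : ℝ) ≤ s := by exact_mod_cast hs9
        -- `c * r ≥ 2` gives `c * (r * s) ≥ 2 * s ≥ s + 9`.
        have : (s : ℝ) + 9 ≤ (S i ∩ Z).card := by nlinarith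
        exact_mod_cast this
      rcases Nat.eq_zero_or_pos Z.card with h0 | hpos
      · have : (univ.filter fun i => s + 9 ≤ (S i ∩ Z).card).card = 0 := by
          rw [Finset.card_eq_zero.1 h0]
          simp
        rw [this, Nat.le_zero] at hle
        rw [hle]
        simp only [Nat.cast_zero]
        positivity
      · have h4 : 4 * (univ.filter fun i => avgOn x (S i) < γ).card ≤ Z.card :=
          (Nat.mul_le_mul_left 4 hle).trans (hsmall Z hpos hlarge)
        have : (4 : ℝ) * (univ.filter fun i => avgOn x (S i) < γ).card ≤ Z.card := by
          exact_mod_cast h4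
        linarith
    · have hle : (univ.filter fun i => avgOn x (S i) < γ).card
          ≤ (univ.filter fun i => e < |avgOn x (S i) - frac x|).card := by
        apply Finset.card_le_card
        intro i
        simp only [mem_filter, mem_univ, true_and]
        intro h
        rw [abs_sub_comm]
        refine lt_of_lt_of_le ?_ (le_abs_self _)
        have := min_le_right ε (c / 2)
        linarith
      push Not at hlarge
      have hl : (2 : ℝ) * M ≤ Z.card * 2 ^ r := by exact_mod_cast hlarge.le
      calc _ ≤ ((univ.filter fun i => e < |avgOn x (S i) - frac x|).card : ℝ) := by
            exact_mod_cast hle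
        _ ≤ M / d := hdev' x
        _ ≤ M / 2 ^ (r + 1) := by gcongr
        _ ≤ η / 2 * M := by
            rw [div_le_iff₀ (by positivity), pow_succ]
            have h2r : (0 : ℝ) < 2 ^ r := by positivity
            have : 2 * (M : ℝ) ≤ η * (2 * M) * 2 ^ r := hl.trans (by gcongr)
            linarith
end

section
/- For all constants ε, δ ∈ (0,1) there exist positive integers C₁, C₂ and N₀ such that for every N ≥ N₀ there exists a family S₁, …, S_N of subsets of {1,…,N} with the following properties: (1) every set S_i has cardinality at most C₁; (2) every set S_i has nonempty intersection with at most C₂ of the other sets S_j (j ≠ i); (3) for every string x ∈ {0,1}^N, the fraction of indices i ∈ {1,…,N} with |avg(x|_{S_i}) − x̄| > ε is at most δ. -/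
/-!
The family is obtained by the probabilistic method. Choose `f i`, for `i : Fin N`, independently and
uniformly among the `d`-element subsets of `Fin N`, with `d` a large constant.

* For fixed `x`, Chebyshev's inequality for sampling without replacement bounds the probability that
  `f i` misestimates `frac x` by more than `ε` by `1 / K`, where `K = d * ε ^ 2`. By independence,
  the number `b` of misestimating indices satisfies `𝔼 (K ^ b) ≤ 2 ^ N`, so the sum over all `x` of
  these expectations is at most `4 ^ N`. Once `K ≥ 8 ^ m` with `m ≥ 2 / δ`, a value of this sum
  at most `2 * 4 ^ N` forces `b ≤ δ / 2 * N` for all `x` simultaneously.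
* The load of a point `j`, i.e. the number of `i` with `j ∈ f i`, satisfies
  `𝔼 (4 ^ load) ≤ exp (3 * d)`. Hence all but a small fraction of the `f i` contain only points of
  load at most a constant `D`. Replacing the other `f i` by `∅` makes every remaining set meet
  at most `d * D` others, and spoils at most `δ / 2 * N` indices.

Both expectations are instances of one exponential-moment bound (`sum_pow_card_le`), and a single
averaging argument yields an `f` that is good for both.
-/

open Finset

/-- Exponential moment of the number of indices `i` for which `p (f i)` holds, where the `f i` are
independent and uniform in `T` and `p` has probability at most `q` (unnormalised). -/
lemma sum_pow_card_le {α : Type*} [DecidableEq α] (T : Finset α) (p : α → Prop) [DecidablePred p]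
    (n : ℕ) (K q : ℝ) (hK : 1 ≤ K) (h : (#(T.filter p) : ℝ) ≤ q * #T) :
    ∑ f ∈ Fintype.piFinset (fun _ : Fin n => T), K ^ #(univ.filter fun i => p (f i))
      ≤ (#T * (1 + (K - 1) * q)) ^ n := by
  have h1 : ∀ f : Fin n → α, K ^ #(univ.filter fun i => p (f i))
      = ∏ i, if p (f i) then K else 1 := by
    intro f
    rw [Finset.prod_ite]; simp
  have h2 : ∑ t ∈ T, (if p t then K else 1) = #T + (K - 1) * #(T.filter p) := by
    have : ∀ t ∈ T, (if p t then K else 1) = 1 + (K - 1) * (if p t then 1 else 0) := by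
      intro t _; split_ifs <;> ring
    rw [sum_congr rfl this, sum_add_distrib, ← mul_sum]
    simp
  simp_rw [h1]
  rw [← Finset.prod_univ_sum (fun _ : Fin n => T) (fun _ t => if p t then K else 1)]
  simp only [h2, prod_const, card_univ, Fintype.card_fin]
  have h3 : (K - 1) * (#(T.filter p) : ℝ) ≤ (K - 1) * (q * #T) :=
    mul_le_mul_of_nonneg_left h (by linarith)
  have h4 : 0 ≤ (K - 1) * (#(T.filter p) : ℝ) := mul_nonneg (by linarith) (by positivity)
  exact pow_le_pow_left₀ (by positivity) (by linarith) n

/-- Double count of the incidences between a point and the `d`-subsets containing it. -/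
lemma mul_choose_pred (N d : ℕ) (hd : 2 ≤ d) (hdN : d ≤ N) :
    (N : ℝ) * ((N - 1).choose (d - 1) : ℝ) = d * (N.choose d : ℝ) := by
  obtain ⟨n, rfl⟩ : ∃ n, N = n + 1 := ⟨N - 1, by omega⟩
  obtain ⟨k, rfl⟩ : ∃ k, d = k + 1 := ⟨d - 1, by omega⟩
  have := Nat.add_one_mul_choose_eq n k
  simp only [Nat.add_sub_cancel]
  rw [mul_comm ((k + 1 : ℕ) : ℝ)]
  exact_mod_cast this

lemma card_filter_mem (N d : ℕ) (hd : 2 ≤ d) (j : Fin N) :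
    #((powersetCard d (univ : Finset (Fin N))).filter (fun S => j ∈ S))
      = (N - 1).choose (d - 1) := by
  have := card_filter_powersetCard_subset {j} (univ : Finset (Fin N)) d (subset_univ _)
    (by simp; omega)
  simpa using this

lemma card_filter_mem_pair (N d : ℕ) (hd : 2 ≤ d) (j k : Fin N) (hjk : j ≠ k) :
    #((powersetCard d (univ : Finset (Fin N))).filter (fun S => j ∈ S ∧ k ∈ S))
      = (N - 2).choose (d - 2) := by
  have := card_filter_powersetCard_subset {j, k} (univ : Finset (Fin N)) d (subset_univ _)
    (by rw [card_pair hjk]; exact hd)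
  simpa [card_pair hjk, insert_subset_iff] using this

/-- Variance bound for sampling without replacement: the sum of a uniform `d`-subset of a centred
population with values in `[-1, 1]` has second moment at most `d`, since the covariances are
nonpositive. -/
lemma sum_sq_le (N d : ℕ) (hd : 2 ≤ d) (hdN : d ≤ N) (y : Fin N → ℝ) (hy : ∑ j, y j = 0)
    (hy1 : ∀ j, y j ^ 2 ≤ 1) :
    ∑ S ∈ powersetCard d (univ : Finset (Fin N)), (∑ j ∈ S, y j) ^ 2
      ≤ d * #(powersetCard d (univ : Finset (Fin N))) := by
  set T := powersetCard d (univ : Finset (Fin N)) with hT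
  set c1 : ℝ := ((N - 1).choose (d - 1) : ℝ) with hc1
  set c2 : ℝ := ((N - 2).choose (d - 2) : ℝ) with hc2
  have e1 : ∀ S ∈ T, (∑ j ∈ S, y j) ^ 2
      = ∑ j, ∑ k, y j * y k * (if j ∈ S ∧ k ∈ S then 1 else 0) := by
    intro S _
    have : ∑ j ∈ S, y j = ∑ j, y j * (if j ∈ S then 1 else 0) := by simp
    rw [this, sq, sum_mul_sum]
    refine sum_congr rfl fun j _ => sum_congr rfl fun k _ => ?_
    by_cases h1 : j ∈ S <;> by_cases h2 : k ∈ S <;> simp [h1, h2]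
  have e2 : ∑ S ∈ T, (∑ j ∈ S, y j) ^ 2
      = ∑ j, ∑ k, (c2 * (y j * y k) + if j = k then (c1 - c2) * (y j) ^ 2 else 0) := by
    rw [sum_congr rfl e1, sum_comm]
    refine sum_congr rfl fun j _ => ?_
    rw [sum_comm]
    refine sum_congr rfl fun k _ => ?_
    rw [← mul_sum, sum_boole]
    by_cases hjk : j = k
    · subst hjk
      simp only [and_self, hT, card_filter_mem N d hd j, if_true]
      rw [← hc1]; ring
    · rw [hT, card_filter_mem_pair N d hd j k hjk, if_neg hjk, ← hc2]; ring
  have e3 : ∑ S ∈ T, (∑ j ∈ S, y j) ^ 2 = (c1 - c2) * ∑ j, y j ^ 2 := by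
    rw [e2]
    simp only [sum_add_distrib, ← mul_sum, hy, mul_zero, zero_add,
      sum_ite_eq, mem_univ, if_true]
  have h1 : ∑ j, y j ^ 2 ≤ N := by
    calc ∑ j, y j ^ 2 ≤ ∑ _j : Fin N, (1 : ℝ) := sum_le_sum fun j _ => hy1 j
      _ = N := by simp
  have h0 : 0 ≤ ∑ j, y j ^ 2 := sum_nonneg fun j _ => sq_nonneg _
  have hc2n : 0 ≤ c2 := by positivity
  have hc1n : 0 ≤ c1 := by positivity
  have hcard : (#T : ℝ) = N.choose d := by rw [hT, card_powersetCard]; simp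
  rw [e3, hcard, ← mul_choose_pred N d hd hdN]
  nlinarith

/-- Chebyshev: at most a `1 / (d * ε ^ 2)` fraction of the `d`-subsets misestimate `frac x`. -/
lemma card_bad_le (N d : ℕ) (hd : 2 ≤ d) (hdN : d ≤ N) (x : Fin N → Bool) (ε : ℝ) (hε : 0 < ε)
    [DecidablePred fun S : Finset (Fin N) => |avgOn x S - frac x| > ε] :
    (#((powersetCard d (univ : Finset (Fin N))).filter
      (fun S => |avgOn x S - frac x| > ε)) : ℝ)
      ≤ (d * ε ^ 2)⁻¹ * #(powersetCard d (univ : Finset (Fin N))) := by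
  set T := powersetCard d (univ : Finset (Fin N)) with hT
  have hd0 : (0 : ℝ) < d := by exact_mod_cast (by omega : 0 < d)
  have hN0 : (0 : ℝ) < N := by exact_mod_cast (by omega : 0 < N)
  set z : Fin N → ℝ := fun j => if x j then 1 else 0 with hz
  have hz0 : ∀ j, 0 ≤ z j := fun j => by simp only [hz]; split_ifs <;> norm_num
  have hz1 : ∀ j, z j ≤ 1 := fun j => by simp only [hz]; split_ifs <;> norm_num
  have hf : frac x = (∑ j, z j) / N := rfl
  have hf0 : 0 ≤ frac x := by rw [hf]; exact div_nonneg (sum_nonneg fun j _ => hz0 j) hN0.le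
  have hf1 : frac x ≤ 1 := by
    rw [hf, div_le_one hN0]
    calc ∑ j, z j ≤ ∑ _j : Fin N, (1 : ℝ) := sum_le_sum fun j _ => hz1 j
      _ = N := by simp
  have key := sum_sq_le N d hd hdN (fun j => z j - frac x)
    (by rw [sum_sub_distrib]; simp only [sum_const, card_univ, Fintype.card_fin, nsmul_eq_mul]
        rw [hf]; field_simp; ring)
    (fun j => by have := hz0 j; have := hz1 j; rw [sq_le_one_iff_abs_le_one, abs_le]
                 constructor <;> linarith)
  rw [← hT] at key
  have h2 : ∑ S ∈ T.filter (fun S => |avgOn x S - frac x| > ε), (d * ε) ^ 2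
      ≤ ∑ S ∈ T, (∑ j ∈ S, (z j - frac x)) ^ 2 := by
    refine (sum_le_sum fun S hS => ?_).trans
      (sum_le_sum_of_subset_of_nonneg (filter_subset _ T) fun S _ _ => sq_nonneg _)
    rw [mem_filter, hT, mem_powersetCard_univ] at hS
    obtain ⟨hc, hb⟩ := hS
    have : ∑ j ∈ S, (z j - frac x) = d * (avgOn x S - frac x) := by
      rw [sum_sub_distrib, avgOn, hc]
      simp only [sum_const, hc, nsmul_eq_mul]
      field_simp
      rfl
    rw [this, sq_le_sq, abs_mul, abs_mul, abs_of_pos hε]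
    exact mul_le_mul_of_nonneg_left hb.le (abs_nonneg _)
  rw [sum_const, nsmul_eq_mul] at h2
  rw [inv_mul_eq_div, le_div_iff₀ (by positivity)]
  have h3 := h2.trans key
  refine le_of_mul_le_mul_left ?_ hd0
  linarith

/-- The number of sets of the family `f` containing `j`. -/
def load {N : ℕ} (f : Fin N → Finset (Fin N)) (j : Fin N) : ℕ := #(univ.filter fun i => j ∈ f i)

/-- The subfamily in which sets containing a point of load above `D` are replaced by `∅`. -/
def prune {N : ℕ} (D : ℕ) (f : Fin N → Finset (Fin N)) (i : Fin N) : Finset (Fin N) :=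
  if ∀ j ∈ f i, load f j ≤ D then f i else ∅

lemma prune_subset {N : ℕ} (D : ℕ) (f : Fin N → Finset (Fin N)) (i : Fin N) :
    prune D f i ⊆ f i := by
  unfold prune; split_ifs <;> simp

lemma load_le_of_mem_prune {N : ℕ} {D : ℕ} {f : Fin N → Finset (Fin N)} {i j : Fin N}
    (h : j ∈ prune D f i) : load f j ≤ D := by
  unfold prune at h
  split_ifs at h with h1
  · exact h1 j h
  · simp at h

lemma card_meet_prune_le {N d D : ℕ} (f : Fin N → Finset (Fin N)) (hf : ∀ i, #(f i) = d)
    (i : Fin N) (A : Finset (Fin N))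
    (hA : ∀ j ∈ A, (prune D f i ∩ prune D f j).Nonempty) : #A ≤ d * D := by
  have hsub : A ⊆ (prune D f i).biUnion fun v => univ.filter fun j => v ∈ f j := by
    intro j hj
    obtain ⟨v, hv⟩ := hA j hj
    rw [mem_inter] at hv
    rw [mem_biUnion]
    exact ⟨v, hv.1, by simpa using prune_subset D f j hv.2⟩
  refine (card_le_card hsub).trans ((card_biUnion_le_card_mul _ _ D fun v hv => ?_).trans ?_)
  · exact load_le_of_mem_prune hv
  · exact Nat.mul_le_mul_right D ((card_le_card (prune_subset D f i)).trans (hf i).le)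

/-- A discarded set contains a point of load `L > D`, and each such point accounts for at most
`L ≤ 4 ^ L / 2 ^ D` discarded sets. -/
lemma card_pruned_le {N D : ℕ} (f : Fin N → Finset (Fin N)) :
    #(univ.filter fun i => prune D f i ≠ f i) * 2 ^ D ≤ ∑ j, 4 ^ load f j := by
  have hsub : (univ.filter fun i => prune D f i ≠ f i)
      ⊆ (univ.filter fun j => D < load f j).biUnion fun v => univ.filter fun i => v ∈ f i := by
    intro i hi
    rw [mem_filter] at hi
    have h := hi.2
    unfold prune at h
    split_ifs at h with h1
    · exact absurd rfl h
    · push Not at h1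
      obtain ⟨v, hv, hl⟩ := h1
      rw [mem_biUnion]
      exact ⟨v, by simpa using hl, by simpa using hv⟩
  have h1 := (card_le_card hsub).trans card_biUnion_le
  refine (Nat.mul_le_mul_right _ h1).trans ?_
  rw [sum_mul]
  refine (sum_le_sum fun j hj => ?_).trans (sum_le_sum_of_subset (filter_subset _ _))
  rw [mem_filter] at hj
  calc load f j * 2 ^ D ≤ 2 ^ load f j * 2 ^ load f j :=
        Nat.mul_le_mul Nat.lt_two_pow_self.le (Nat.pow_le_pow_right (by norm_num) hj.2.le)
    _ = 4 ^ load f j := by rw [← mul_pow]; norm_num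

open Classical in
/-- Averaging over independent uniform `d`-subsets gives a family that is simultaneously good for
the estimation of all strings and for the loads. -/
lemma exists_family_s1 (N d : ℕ) (hd : 2 ≤ d) (hdN : d ≤ N) (ε : ℝ) (hε : 0 < ε)
    (hK : 1 ≤ d * ε ^ 2) :
    ∃ f : Fin N → Finset (Fin N), (∀ i, #(f i) = d) ∧
      (∀ x : Fin N → Bool,
        (d * ε ^ 2) ^ #(univ.filter fun i => |avgOn x (f i) - frac x| > ε) ≤ 2 * 4 ^ N) ∧
      (∑ j, (4 : ℝ) ^ load f j) ≤ 2 * (N * Real.exp (3 * d)) := by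
  set T := powersetCard d (univ : Finset (Fin N)) with hT
  set Ω := Fintype.piFinset (fun _ : Fin N => T) with hΩ
  set K : ℝ := d * ε ^ 2 with hKdef
  have hN0 : (0 : ℝ) < N := by exact_mod_cast (by omega : 0 < N)
  have hTne : T.Nonempty := by rw [hT, powersetCard_nonempty]; simpa using hdN
  have hΩne : Ω.Nonempty := by
    obtain ⟨t, ht⟩ := hTne
    exact ⟨fun _ => t, by simp [hΩ, ht]⟩
  have hT0 : (0 : ℝ) < #T := by exact_mod_cast hTne.card_pos
  have hΩc : (#Ω : ℝ) = (#T : ℝ) ^ N := by simp [hΩ]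
  have hA : ∑ f ∈ Ω, ∑ x : Fin N → Bool,
      K ^ #(univ.filter fun i => |avgOn x (f i) - frac x| > ε) ≤ #Ω * 4 ^ N := by
    rw [sum_comm]
    calc _ ≤ ∑ _x : Fin N → Bool, ((#T : ℝ) * 2) ^ N := by
          refine sum_le_sum fun x _ => ?_
          refine (sum_pow_card_le T (fun S => |avgOn x S - frac x| > ε) N K K⁻¹ hK
            (card_bad_le N d hd hdN x ε hε)).trans ?_
          have hKi : 0 < K⁻¹ := by positivity
          have : (K - 1) * K⁻¹ = 1 - K⁻¹ := by
            rw [sub_mul, mul_inv_cancel₀ (by positivity)]; ring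
          rw [this]
          have h1 : K⁻¹ ≤ 1 := inv_le_one_of_one_le₀ hK
          exact pow_le_pow_left₀ (mul_nonneg hT0.le (by linarith))
            (mul_le_mul_of_nonneg_left (by linarith) hT0.le) N
      _ = #Ω * 4 ^ N := by
          rw [hΩc]
          simp only [sum_const, card_univ, Fintype.card_fun, Fintype.card_bool, Fintype.card_fin,
            nsmul_eq_mul, Nat.cast_pow, Nat.cast_ofNat]
          rw [← mul_pow, ← mul_pow]; ring
  have hB : ∑ f ∈ Ω, ∑ j, (4 : ℝ) ^ load f j ≤ #Ω * (N * Real.exp (3 * d)) := by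
    rw [sum_comm]
    calc _ ≤ ∑ _j : Fin N, (#T : ℝ) ^ N * Real.exp (3 * d) := by
          refine sum_le_sum fun j _ => ?_
          have hq : (#(T.filter fun S => j ∈ S) : ℝ) ≤ (d / N : ℝ) * #T := by
            rw [hT, card_filter_mem N d hd j, card_powersetCard, card_univ, Fintype.card_fin,
              div_mul_eq_mul_div, le_div_iff₀ hN0, ← mul_choose_pred N d hd hdN, mul_comm]
          refine (sum_pow_card_le T (fun S => j ∈ S) N 4 (d / N) (by norm_num) hq).trans ?_
          rw [mul_pow]
          refine mul_le_mul_of_nonneg_left ?_ (by positivity)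
          have h1 : 1 + (4 - 1) * ((d : ℝ) / N) ≤ Real.exp (3 * d / N) := by
            have := Real.add_one_le_exp (3 * (d : ℝ) / N)
            refine le_trans (le_of_eq ?_) this
            ring
          refine (pow_le_pow_left₀ (by positivity) h1 N).trans (le_of_eq ?_)
          rw [← Real.exp_nat_mul]
          congr 1
          field_simp
      _ = #Ω * (N * Real.exp (3 * d)) := by
          rw [hΩc]; simp; ring
  set a : (Fin N → Finset (Fin N)) → ℝ := fun f => ∑ x : Fin N → Bool,
      K ^ #(univ.filter fun i => |avgOn x (f i) - frac x| > ε) with ha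
  set b : (Fin N → Finset (Fin N)) → ℝ := fun f => ∑ j, (4 : ℝ) ^ load f j with hb
  set E : ℝ := N * Real.exp (3 * d) with hE
  have hE0 : 0 < E := by positivity
  obtain ⟨f, hf, hle⟩ : ∃ f ∈ Ω, a f / 4 ^ N + b f / E ≤ 2 := by
    refine exists_le_of_sum_le hΩne ?_
    rw [sum_add_distrib, ← sum_div, ← sum_div]
    have h1 : (∑ f ∈ Ω, a f) / 4 ^ N ≤ #Ω := (div_le_iff₀ (by positivity)).2 hA
    have h2 : (∑ f ∈ Ω, b f) / E ≤ #Ω := (div_le_iff₀ hE0).2 hB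
    simp only [sum_const, nsmul_eq_mul]
    linarith
  have hK0 : 0 ≤ K := by linarith
  have ha0 : 0 ≤ a f := sum_nonneg fun x _ => pow_nonneg hK0 _
  have hb0 : 0 ≤ b f := sum_nonneg fun x _ => by positivity
  have ha1 : 0 ≤ a f / 4 ^ N := by positivity
  have hb1 : 0 ≤ b f / E := by positivity
  refine ⟨f, fun i => ?_, fun x => ?_, ?_⟩
  · have := Fintype.mem_piFinset.1 hf i
    exact mem_powersetCard_univ.1 this
  · have h1 : a f ≤ 2 * 4 ^ N := by rw [← div_le_iff₀ (by positivity)]; linarith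
    refine le_trans ?_ h1
    exact single_le_sum
      (f := fun x : Fin N → Bool => K ^ #(univ.filter fun i => |avgOn x (f i) - frac x| > ε))
      (fun x _ => pow_nonneg hK0 _) (mem_univ x)
  · rw [← div_le_iff₀ hE0]; linarith

open Classical in
theorem stmt_1 :
    ∀ ε δ : ℝ, ε ∈ Set.Ioo (0 : ℝ) 1 → δ ∈ Set.Ioo (0 : ℝ) 1 →
    ∃ C₁ C₂ N₀ : ℕ, 0 < C₁ ∧ 0 < C₂ ∧ 0 < N₀ ∧
      ∀ N : ℕ, N₀ ≤ N →
        ∃ S : Fin N → Finset (Fin N),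
          (∀ i, (S i).card ≤ C₁) ∧
          (∀ i, (univ.filter (fun j : Fin N => j ≠ i ∧ (S i ∩ S j).Nonempty)).card ≤ C₂) ∧
          (∀ x : Fin N → Bool,
            ((univ.filter (fun i : Fin N => |avgOn x (S i) - frac x| > ε)).card : ℝ)
              / (N : ℝ) ≤ δ) := by
  rintro ε δ ⟨hε, -⟩ ⟨hδ, -⟩
  obtain ⟨m, hm⟩ := exists_nat_ge (2 / δ)
  obtain ⟨d₀, hd₀⟩ := exists_nat_ge (8 ^ m / ε ^ 2)
  set d := max 2 d₀ with hd
  have hd2 : 2 ≤ d := le_max_left _ _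
  have hK : (8 : ℝ) ^ m ≤ d * ε ^ 2 := by
    rw [← div_le_iff₀ (by positivity)]
    exact hd₀.trans (by exact_mod_cast le_max_right _ _)
  obtain ⟨D, hD⟩ := pow_unbounded_of_one_lt (4 * Real.exp (3 * d) / δ) (one_lt_two (α := ℝ))
  rw [div_lt_iff₀ hδ] at hD
  refine ⟨d, d * D + 1, d, by omega, by omega, by omega, fun N hN => ?_⟩
  have hN0 : (0 : ℝ) < N := by exact_mod_cast (by omega : 0 < N)
  obtain ⟨f, hf, hest, hload⟩ := exists_family_s1 N d hd2 hN ε hε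
    ((one_le_pow₀ (by norm_num)).trans hK)
  refine ⟨prune D f, fun i => (card_le_card (prune_subset D f i)).trans (hf i).le, fun i => ?_,
    fun x => ?_⟩
  · refine (card_meet_prune_le f hf i _ fun j hj => ?_).trans (Nat.le_succ _)
    exact (mem_filter.1 hj).2.2
  · have hprune : (#(univ.filter fun i => prune D f i ≠ f i) : ℝ) ≤ δ / 2 * N := by
      have h1 : (#(univ.filter fun i => prune D f i ≠ f i) : ℝ) * 2 ^ D
          ≤ ∑ j, (4 : ℝ) ^ load f j := by
        have := card_pruned_le (D := D) f
        exact_mod_cast this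
      have h2 := h1.trans hload
      refine le_of_mul_le_mul_right (h2.trans ?_) (show (0 : ℝ) < 2 ^ D by positivity)
      nlinarith
    have hbad : (#(univ.filter fun i => |avgOn x (f i) - frac x| > ε) : ℝ) ≤ δ / 2 * N := by
      set b := #(univ.filter fun i => |avgOn x (f i) - frac x| > ε) with hb
      by_contra! hlt
      -- more than `δ / 2 * N` errors would give `8 ^ N < K ^ b ≤ 2 * 4 ^ N`
      have h1 : N < m * b := by
        rw [div_le_iff₀ hδ] at hm
        have hm0 : (0 : ℝ) < m := by
          by_contra! h
          nlinarith
        have : (N : ℝ) < m * b := by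
          have := mul_lt_mul_of_pos_left hlt hm0
          nlinarith
        exact_mod_cast this
      have h2 : (8 : ℝ) ^ N < 2 * 4 ^ N := by
        calc (8 : ℝ) ^ N < 8 ^ (m * b) := pow_lt_pow_right₀ (by norm_num) h1
          _ = (8 ^ m) ^ b := pow_mul _ _ _
          _ ≤ (d * ε ^ 2) ^ b := pow_le_pow_left₀ (by positivity) hK b
          _ ≤ _ := hest x
      have h3 : (8 : ℝ) ^ N = 2 ^ N * 4 ^ N := by rw [← mul_pow]; norm_num
      have h4 : (2 : ℝ) ≤ 2 ^ N := le_self_pow₀ (by norm_num) (by omega)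
      have h5 : (0 : ℝ) < 4 ^ N := by positivity
      nlinarith
    have hsub : (univ.filter (fun i : Fin N => |avgOn x (prune D f i) - frac x| > ε))
        ⊆ (univ.filter fun i => prune D f i ≠ f i)
          ∪ (univ.filter fun i => |avgOn x (f i) - frac x| > ε) := by
      intro i hi
      rw [mem_union, mem_filter, mem_filter]
      by_cases h : prune D f i = f i
      · right
        rw [mem_filter, h] at hi
        exact hi
      · exact Or.inl ⟨mem_univ _, h⟩
    have hcard : (#(univ.filter (fun i : Fin N => |avgOn x (prune D f i) - frac x| > ε)) : ℝ)
        ≤ #(univ.filter fun i => prune D f i ≠ f i)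
          + #(univ.filter fun i => |avgOn x (f i) - frac x| > ε) := by
      exact_mod_cast (card_le_card hsub).trans (card_union_le _ _)
    rw [div_le_iff₀ hN0]
    linarith
end

section
/- There exist a positive integer f and a positive integer m₀ such that for every power of two m ≥ m₀ the following holds. Let d = ⌊log₂ log₂ m⌋ and w_i = m/2^i for 0 ≤ i ≤ d. For each i ∈ {1,…,d} and j ∈ {1,…,w_i}, choose independently and uniformly at random a tuple S_{i,j} ∈ {1,…,w_{i−1}}^f (sampling the f entries with replacement). Then for every fixed string y₀ ∈ {0,1}^m with ȳ₀ ≥ 9/10, defining recursively y_i ∈ {0,1}^{w_i} by (y_i)_j = 1 iff the fraction of ones among the f bits y_{i−1}(S_{i,j}(1)), …, y_{i−1}(S_{i,j}(f)) is at least 4/5, the following event has probability at least 1 − m^{−1/4}: for every i ∈ {0,1,…,d}, ȳ_i ≥ 1 − (1/10)^{2^i}, and moreover y_d is the all-ones string. -/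
/-!
Write `δ_i = 10 ^ (-2 ^ i)`, so that `δ_{i+1} = δ_i ^ 2`; the invariant says that `y_i` has at most a
`δ_i` fraction of zeros. Take `f = 550`.

If the invariant holds for `y_i`, a bit of `y_{i+1}` is zero only if more than a fifth of its `550`
samples are zeros, and a Chernoff bound gives this probability at most `δ_i ^ 10`
(`tuple_fail_le`). The bits of `y_{i+1}` being independent given `y_i`, a second Chernoff bound
shows that more than `w_{i+1} δ_i ^ 2` of them are zero with probability at most `δ_i ^ (7 K)`,
where `K = ⌊w_{i+1} δ_i ^ 2⌋ + 1` (`layer_fail_le`). This is at most `1 / m` at every layer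
(`layer_bound`): for late layers `δ_i` itself is a small enough power of `1 / m`, and for early
ones `K ≥ log₂ m`.

The string `y_i` depends only on the first `i` layers of tuples, so the bound for fixed `y_i`
transfers to the whole product space (`prob_le_of_update`), and a union bound over the first layer
at which the invariant is lost gives failure probability at most `d / m ≤ m ^ (-1/4)`. Finally
`δ_d < 1 / w_d`, so the invariant at `d` already says that `y_d` has no zeros (`all_ones`).
-/

open Finset

/-- The fraction of ones among the first `W` bits of `x : ℕ → Bool`. -/
noncomputable def fracOn (x : ℕ → Bool) (W : ℕ) : ℝ :=
  (∑ i ∈ Finset.range W, if x i then (1 : ℝ) else 0) / W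

/-- The fraction of ones among the `f` bits of `x` indexed by the tuple `T`. -/
noncomputable def tupleFrac (f : ℕ) (x : ℕ → Bool) (T : Fin f → ℕ) : ℝ :=
  (∑ a : Fin f, if x (T a) then (1 : ℝ) else 0) / f

open Classical in
/-- The probability of the event `E` under the uniform distribution on the finite type `Ω`. -/
noncomputable def prob {Ω : Type*} [Fintype Ω] (E : Ω → Prop) : ℝ :=
  ((Finset.univ.filter E).card : ℝ) / (Fintype.card Ω : ℝ)

/-! ### Uniform probability and fractions of ones -/

open Classical in
/-- Chernoff bound in product form: if a uniform point of `V` is in `B` with probability at most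
`q`, then among `n` independent points at least `K` are in `B` with probability at most
`(1 + q (t - 1)) ^ n / t ^ K`, for every `t ≥ 1`. -/
theorem prob_count_le {V : Type*} [Fintype V] [Nonempty V] (B : V → Prop) (n K : ℕ) (q t : ℝ)
    (ht : 1 ≤ t) (hq : prob B ≤ q) :
    prob (fun v : Fin n → V => K ≤ (univ.filter (fun j => B (v j))).card)
      ≤ (1 + q * (t - 1)) ^ n / t ^ K := by
  have hV : (0 : ℝ) < Fintype.card V := by exact_mod_cast Fintype.card_pos
  have htK : 0 < t ^ K := by positivity
  unfold prob at hq ⊢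
  rw [div_le_iff₀ hV] at hq
  rw [div_le_div_iff₀ (by simpa using pow_pos hV n) htK]
  have h1 : ((univ.filter (fun v : Fin n → V =>
      K ≤ (univ.filter (fun j => B (v j))).card)).card : ℝ) * t ^ K
      ≤ ∑ v : Fin n → V, ∏ j, (if B (v j) then t else 1) := by
    rw [← nsmul_eq_mul, ← Finset.sum_const, Finset.sum_filter]
    refine Finset.sum_le_sum fun v _ => ?_
    rw [Finset.prod_ite, Finset.prod_const, Finset.prod_const_one, mul_one]
    split_ifs with h
    · exact pow_le_pow_right₀ ht h
    · positivity
  have h2 : ∑ v : Fin n → V, ∏ j, (if B (v j) then t else 1)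
      = (∑ u : V, (if B u then t else 1)) ^ n :=
    (Fintype.sum_pow (fun u : V => if B u then t else 1) n).symm
  have h3 : ∑ u : V, (if B u then t else 1)
      = Fintype.card V + ((univ.filter B).card : ℝ) * (t - 1) := by
    have : ∀ u : V, (if B u then t else 1) = 1 + (if B u then (t - 1) else 0) := by
      intro u; split_ifs <;> ring
    simp_rw [this]
    rw [Finset.sum_add_distrib, ← Finset.sum_filter, Finset.sum_const, Finset.sum_const,
      Finset.card_univ, nsmul_eq_mul, nsmul_eq_mul, mul_one]
  refine (le_of_eq ?_).trans (h1.trans ?_)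
  · congr!
  rw [h2, h3]
  have h4 : (Fintype.card (Fin n → V) : ℝ) = (Fintype.card V : ℝ) ^ n := by simp
  rw [h4, ← mul_pow]
  refine pow_le_pow_left₀ (by have : 0 ≤ t - 1 := by linarith
                              positivity) ?_ n
  nlinarith [mul_le_mul_of_nonneg_right hq (sub_nonneg.2 ht)]

theorem prob_mono {Ω : Type*} [Fintype Ω] {A B : Ω → Prop} (h : ∀ ω, A ω → B ω) :
    prob A ≤ prob B := by
  unfold prob
  gcongr
  exact h _

theorem fracOn_eq (x : ℕ → Bool) {W : ℕ} (hW : 0 < W) :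
    fracOn x W = 1 - ((univ.filter (fun j : Fin W => ¬ x j = true)).card : ℝ) / W := by
  have hW' : (W : ℝ) ≠ 0 := by positivity
  unfold fracOn
  rw [Finset.sum_range]
  have h := Finset.card_filter_add_card_filter_not (s := (univ : Finset (Fin W)))
    (fun j : Fin W => x j = true)
  have h' : ((univ.filter (fun j : Fin W => x j = true)).card : ℝ)
    + ((univ.filter (fun j : Fin W => ¬ x j = true)).card : ℝ) = W := by
    exact_mod_cast (by simpa using h)
  rw [← Finset.sum_filter, Finset.sum_const, nsmul_eq_mul, mul_one]
  field_simp
  linarith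

theorem tupleFrac_eq (x : ℕ → Bool) {f : ℕ} (hf : 0 < f) (T : Fin f → ℕ) :
    tupleFrac f x T = 1 - ((univ.filter (fun a : Fin f => ¬ x (T a) = true)).card : ℝ) / f := by
  have hW' : (f : ℝ) ≠ 0 := by positivity
  unfold tupleFrac
  have h := Finset.card_filter_add_card_filter_not (s := (univ : Finset (Fin f)))
    (fun a : Fin f => x (T a) = true)
  have h' : ((univ.filter (fun a : Fin f => x (T a) = true)).card : ℝ)
    + ((univ.filter (fun a : Fin f => ¬ x (T a) = true)).card : ℝ) = f := by
    exact_mod_cast (by simpa using h)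
  rw [← Finset.sum_filter, Finset.sum_const, nsmul_eq_mul, mul_one]
  field_simp
  linarith

/-! ### Failure of one tuple and of one layer -/

/-- The rate of the tuple test. Five samples contribute the factor
`(6/5 - δ) ^ 5 * (5 * δ)` to the Chernoff bound with parameter `t = 1 / (5 δ)`; its eleventh power
is at most `δ` at every `δ = 10 ^ (-2 ^ i)`. At `δ = 1 / 10` there is little room, which is what
forces `t` to be tuned. -/
theorem rate_le (i : ℕ) (δ : ℝ) (hδ : δ = (1 / 10 : ℝ) ^ (2 ^ i)) :
    ((6 / 5 - δ) ^ 5 * (5 * δ)) ^ 11 ≤ δ := by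
  rcases Nat.eq_zero_or_pos i with rfl | hi
  · subst hδ; norm_num
  · have hpos : 0 < δ := by rw [hδ]; positivity
    have h1 : δ ≤ 1 / 100 := by
      have h2 : 2 ≤ 2 ^ i := by
        calc 2 = 2 ^ 1 := rfl
          _ ≤ 2 ^ i := Nat.pow_le_pow_right (by norm_num) hi
      rw [hδ]
      calc (1 / 10 : ℝ) ^ (2 ^ i) ≤ (1 / 10 : ℝ) ^ 2 :=
            pow_le_pow_of_le_one (by norm_num) (by norm_num) h2
        _ = 1 / 100 := by norm_num
    calc ((6 / 5 - δ) ^ 5 * (5 * δ)) ^ 11 ≤ ((6 / 5) ^ 5 * (5 * δ)) ^ 11 := by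
          have : 0 ≤ 6 / 5 - δ := by linarith
          gcongr
          linarith
      _ = (((6 / 5) ^ 5 * 5) ^ 11 * δ ^ 10) * δ := by ring
      _ ≤ (((6 / 5) ^ 5 * 5) ^ 11 * (1 / 100) ^ 10) * δ := by gcongr
      _ ≤ 1 * δ := by gcongr; norm_num
      _ = δ := one_mul δ

theorem delta_le (i : ℕ) : (1 / 10 : ℝ) ^ (2 ^ i) ≤ 1 / 10 := by
  calc (1 / 10 : ℝ) ^ (2 ^ i) ≤ (1 / 10 : ℝ) ^ 1 :=
        pow_le_pow_of_le_one (by norm_num) (by norm_num) Nat.one_le_two_pow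
    _ = 1 / 10 := by norm_num

/-- A single output bit is zero with probability at most `δ ^ 10` when at most a `δ` fraction of
the input bits are zero. -/
theorem tuple_fail_le (x : ℕ → Bool) (W i : ℕ) (hW : 0 < W)
    (hx : 1 - (1 / 10 : ℝ) ^ (2 ^ i) ≤ fracOn x W) :
    prob (fun T : Fin 550 → Fin W => ¬ (4 : ℝ) / 5 ≤ tupleFrac 550 x (fun a => (T a : ℕ)))
      ≤ ((1 / 10 : ℝ) ^ (2 ^ i)) ^ 10 := by
  have hle := delta_le i
  set δ : ℝ := (1 / 10 : ℝ) ^ (2 ^ i) with hδ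
  have hpos : 0 < δ := by rw [hδ]; positivity
  have : Nonempty (Fin W) := ⟨⟨0, hW⟩⟩
  have hp : prob (fun u : Fin W => ¬ x u = true) ≤ δ := by
    rw [fracOn_eq x hW] at hx
    unfold prob
    rw [Fintype.card_fin]
    convert (by linarith : ((univ.filter (fun j : Fin W => ¬ x j = true)).card : ℝ) / W ≤ δ)
  have ht : (1 : ℝ) ≤ 1 / (5 * δ) := by
    rw [le_div_iff₀ (by positivity)]; linarith
  have key := prob_count_le (fun u : Fin W => ¬ x u = true) 550 110 δ (1 / (5 * δ)) ht hp
  refine (prob_mono ?_).trans (key.trans ?_)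
  · intro T hT
    rw [tupleFrac_eq x (by norm_num), not_le] at hT
    have h : (110 : ℝ) < ((univ.filter (fun a : Fin 550 => ¬ x (T a) = true)).card : ℝ) := by
      push_cast at hT
      linarith
    have h' : 110 < (univ.filter (fun a : Fin 550 => ¬ x (T a) = true)).card := by
      exact_mod_cast h
    refine h'.le.trans_eq ?_
    congr!
  · have e1 : 1 + δ * (1 / (5 * δ) - 1) = 6 / 5 - δ := by field_simp; ring
    rw [e1, one_div, inv_pow, div_inv_eq_mul]
    calc (6 / 5 - δ) ^ 550 * (5 * δ) ^ 110
        = (((6 / 5 - δ) ^ 5 * (5 * δ)) ^ 11) ^ 10 := by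
          rw [← pow_mul, mul_pow ((6 / 5 - δ) ^ 5), ← pow_mul]
      _ ≤ δ ^ 10 := by
          have : 0 ≤ 6 / 5 - δ := by linarith
          exact pow_le_pow_left₀ (by positivity) (rate_le i δ hδ) 10

/-- One layer squares the fraction of zeros, outside an event of probability at most `δ ^ (7 K)`
with `K = ⌊w δ²⌋ + 1`. The Chernoff parameter is `t = δ ^ (-8)`: the expectation factor is then at
most `(1 + δ²) ^ w ≤ e ^ (w δ²) ≤ 3 ^ K`, which one factor `δ ≤ 1 / 3` absorbs. -/
theorem layer_fail_le (x : ℕ → Bool) (W w i : ℕ) (hW : 0 < W)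
    (hx : 1 - (1 / 10 : ℝ) ^ (2 ^ i) ≤ fracOn x W) :
    prob (fun v : Fin w → Fin 550 → Fin W =>
        ⌊(w : ℝ) * ((1 / 10 : ℝ) ^ (2 ^ i)) ^ 2⌋₊ + 1 ≤
          (univ.filter (fun j : Fin w =>
            ¬ (4 : ℝ) / 5 ≤ tupleFrac 550 x (fun a => (v j a : ℕ)))).card)
      ≤ ((1 / 10 : ℝ) ^ (2 ^ i)) ^ (7 * (⌊(w : ℝ) * ((1 / 10 : ℝ) ^ (2 ^ i)) ^ 2⌋₊ + 1)) := by
  have hq := tuple_fail_le x W i hW hx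
  have hle := delta_le i
  set δ : ℝ := (1 / 10 : ℝ) ^ (2 ^ i) with hδ
  have hpos : 0 < δ := by rw [hδ]; positivity
  have : Nonempty (Fin W) := ⟨⟨0, hW⟩⟩
  set K := ⌊(w : ℝ) * δ ^ 2⌋₊ + 1 with hK
  have hKw : (w : ℝ) * δ ^ 2 ≤ K := by
    rw [hK]; push_cast; exact (Nat.lt_floor_add_one _).le
  have ht : (1 : ℝ) ≤ 1 / δ ^ 8 := by
    rw [le_div_iff₀ (by positivity), one_mul]
    exact pow_le_one₀ hpos.le (by linarith)
  have key := prob_count_le (fun T : Fin 550 → Fin W =>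
    ¬ (4 : ℝ) / 5 ≤ tupleFrac 550 x (fun a => (T a : ℕ))) w K (δ ^ 10) (1 / δ ^ 8) ht hq
  refine (prob_mono ?_).trans (key.trans ?_)
  · intro v hv
    convert hv
  · rw [one_div, inv_pow, div_inv_eq_mul]
    have e1 : 1 + δ ^ 10 * ((δ ^ 8)⁻¹ - 1) ≤ Real.exp (δ ^ 2) := by
      have h1 : δ ^ 10 * ((δ ^ 8)⁻¹ - 1) = δ ^ 2 - δ ^ 10 := by field_simp
      have h2 := Real.add_one_le_exp (δ ^ 2)
      have h3 : 0 < δ ^ 10 := by positivity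
      linarith
    have e0 : 0 ≤ 1 + δ ^ 10 * ((δ ^ 8)⁻¹ - 1) := by
      rw [one_div] at ht
      have h3 : 0 < δ ^ 10 := by positivity
      nlinarith
    have e2 : (1 + δ ^ 10 * ((δ ^ 8)⁻¹ - 1)) ^ w ≤ 3 ^ K := by
      calc (1 + δ ^ 10 * ((δ ^ 8)⁻¹ - 1)) ^ w ≤ Real.exp (δ ^ 2) ^ w := pow_le_pow_left₀ e0 e1 w
        _ = Real.exp (w * δ ^ 2) := by rw [← Real.exp_nat_mul]
        _ ≤ Real.exp K := Real.exp_le_exp.2 hKw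
        _ = Real.exp 1 ^ K := by rw [← Real.exp_nat_mul, mul_one]
        _ ≤ 3 ^ K := pow_le_pow_left₀ (Real.exp_pos 1).le
            (by linarith [Real.exp_one_lt_d9]) K
    calc (1 + δ ^ 10 * ((δ ^ 8)⁻¹ - 1)) ^ w * (δ ^ 8) ^ K ≤ 3 ^ K * (δ ^ 8) ^ K := by gcongr
      _ = (3 * δ * δ ^ 7) ^ K := by rw [← mul_pow]; congr 1; ring
      _ ≤ (1 * δ ^ 7) ^ K := by gcongr; linarith
      _ = δ ^ (7 * K) := by rw [one_mul, ← pow_mul]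

/-- The bound of `layer_fail_le` is at most `2 ^ (-e)`. Either `2 ^ i ≥ e / 20` and `K ≥ 1`
suffices, or `δ` is so large that `w δ² ≥ e`. -/
theorem layer_bound (e i : ℕ) (hi : i + 1 ≤ e) :
    ((1 / 10 : ℝ) ^ (2 ^ i)) ^
      (7 * (⌊((2 ^ (e - (i + 1)) : ℕ) : ℝ) * ((1 / 10 : ℝ) ^ (2 ^ i)) ^ 2⌋₊ + 1))
      ≤ 1 / 2 ^ e := by
  set K := ⌊((2 ^ (e - (i + 1)) : ℕ) : ℝ) * ((1 / 10 : ℝ) ^ (2 ^ i)) ^ 2⌋₊ + 1 with hK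
  have hKw : ((2 ^ (e - (i + 1)) : ℕ) : ℝ) * ((1 / 10 : ℝ) ^ (2 ^ i)) ^ 2 ≤ K := by
    rw [hK]; push_cast; exact (Nat.lt_floor_add_one _).le
  have hK1 : 1 ≤ K := by omega
  have his : i + 1 ≤ 2 ^ i := Nat.lt_two_pow_self
  generalize hs : 2 ^ i = s at *
  have main : e ≤ 3 * (s * (7 * K)) := by
    by_cases h : e ≤ 20 * s
    · nlinarith
    · push Not at h
      have h1 : (2 : ℝ) ^ (e - 9 * s) ≤ K := by
        refine le_trans ?_ hKw
        have h2 : ((1 / 16 : ℝ) ^ s) ^ 2 ≤ ((1 / 10 : ℝ) ^ s) ^ 2 := by gcongr; norm_num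
        have h3 : ((1 / 16 : ℝ) ^ s) ^ 2 = 1 / 2 ^ (8 * s) := by
          rw [← pow_mul, one_div_pow]
          congr 1
          rw [show (16 : ℝ) = 2 ^ 4 by norm_num, ← pow_mul]
          congr 1; ring
        calc (2 : ℝ) ^ (e - 9 * s) = 2 ^ (e - 9 * s + 8 * s) * (1 / 2 ^ (8 * s)) := by
              rw [pow_add]; field_simp
          _ ≤ 2 ^ (e - (i + 1)) * (1 / 2 ^ (8 * s)) := by
              gcongr
              · norm_num
              · omega
          _ ≤ _ := by
              push_cast
              rw [← h3]
              gcongr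
      have h4 : 2 ^ (e - 9 * s) ≤ K := by exact_mod_cast h1
      obtain ⟨k, hk⟩ : ∃ k, e - 9 * s = k + 1 := ⟨e - 9 * s - 1, by omega⟩
      have h5 : k < 2 ^ k := Nat.lt_two_pow_self
      rw [hk, pow_succ] at h4
      have h6 : e ≤ K := by omega
      have h7 : 1 ≤ s := by omega
      nlinarith
  rw [← pow_mul]
  calc (1 / 10 : ℝ) ^ (s * (7 * K)) ≤ (1 / 8 : ℝ) ^ (s * (7 * K)) := by gcongr; norm_num
    _ = 1 / 2 ^ (3 * (s * (7 * K))) := by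
        rw [one_div_pow, pow_mul 2 3]; norm_num
    _ ≤ 1 / 2 ^ e := by gcongr; norm_num

/-! ### Resampling a coordinate and the union bound -/

/-- An event of a product space that has probability at most `ε` when coordinate `i` alone is
resampled, whatever the other coordinates are, has probability at most `ε`. -/
theorem prob_le_of_update {ι : Type*} [Fintype ι] [DecidableEq ι] {β : ι → Type*}
    [∀ i, Fintype (β i)] [∀ i, Nonempty (β i)] (E : (∀ i, β i) → Prop) (i : ι) (ε : ℝ)
    (h : ∀ ω, prob (fun v : β i => E (Function.update ω i v)) ≤ ε) : prob E ≤ ε := by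
  classical
  have hV : (0 : ℝ) < Fintype.card (β i) := by exact_mod_cast Fintype.card_pos
  obtain ⟨v₀⟩ : Nonempty (β i) := inferInstance
  let φ := Equiv.piSplitAt i β
  have hcard : (Fintype.card (∀ i, β i) : ℝ)
      = Fintype.card (β i) * Fintype.card (∀ j : {j // j ≠ i}, β j) := by
    rw [Fintype.card_congr φ, Fintype.card_prod]; push_cast; rfl
  unfold prob
  rw [div_le_iff₀ (by exact_mod_cast Fintype.card_pos), hcard]
  have hsum : ((univ.filter E).card : ℝ)
      = ∑ r : (∀ j : {j // j ≠ i}, β j), ∑ v : β i, if E (φ.symm (v, r)) then (1 : ℝ) else 0 := by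
    rw [← Finset.sum_boole, ← Equiv.sum_comp φ.symm, Fintype.sum_prod_type, Finset.sum_comm]
  have hup : ∀ r v, φ.symm (v, r) = Function.update (φ.symm (v₀, r)) i v := by
    intro r v
    funext j
    by_cases hj : j = i
    · subst hj
      simp [φ]
    · rw [Function.update_of_ne hj]
      simp [φ, hj]
  have hsum' : ((univ.filter E).card : ℝ)
      ≤ ∑ r : (∀ j : {j // j ≠ i}, β j), ε * Fintype.card (β i) := by
    rw [hsum]
    refine Finset.sum_le_sum fun r _ => ?_
    have := h (φ.symm (v₀, r))
    unfold prob at this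
    rw [div_le_iff₀ hV] at this
    rw [Finset.sum_boole]
    simp only [← hup r] at this
    convert this
  rw [Finset.sum_const, nsmul_eq_mul, Finset.card_univ] at hsum'
  linarith

theorem prob_union_bound {Ω ι : Type*} [Fintype Ω] [Nonempty Ω] [Fintype ι] (G : Ω → Prop)
    (B : ι → Ω → Prop) (h : ∀ ω, ¬ G ω → ∃ i, B i ω) : 1 - ∑ i, prob (B i) ≤ prob G := by
  classical
  have hV : (0 : ℝ) < Fintype.card Ω := by exact_mod_cast Fintype.card_pos
  unfold prob
  rw [← Finset.sum_div, sub_le_iff_le_add, ← add_div, le_div_iff₀ hV, one_mul]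
  have h1 : (univ : Finset Ω) ⊆ univ.filter G ∪ univ.biUnion (fun i => univ.filter (B i)) := by
    intro ω _
    by_cases hg : G ω
    · simp [hg]
    · obtain ⟨i, hi⟩ := h ω hg
      simp only [mem_union, mem_filter, mem_univ, true_and, mem_biUnion]
      exact Or.inr ⟨i, hi⟩
  have h2 := (Finset.card_le_card h1).trans
    ((Finset.card_union_le _ _).trans (Nat.add_le_add_left Finset.card_biUnion_le _))
  rw [Finset.card_univ] at h2
  have h3 : (Fintype.card Ω : ℝ) ≤ ((univ.filter G).card : ℝ)
      + ∑ i, ((univ.filter (B i)).card : ℝ) := by exact_mod_cast h2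
  convert h3

/-! ### The iterated strings -/

/-- The strings `y_i` produced from `y₀` by the tuples `ω`; positions beyond the length `w i` of a
computed string hold `false`. -/
noncomputable def iterY {d f : ℕ} {w : ℕ → ℕ} (y₀ : ℕ → Bool)
    (ω : (i : Fin d) → Fin (w ((i : ℕ) + 1)) → Fin f → Fin (w (i : ℕ))) : ℕ → ℕ → Bool
  | 0 => y₀
  | i + 1 => fun j =>
      if h : i < d then
        if h2 : j < w (i + 1) then
          (Classical.propDecidable ((4 : ℝ) / 5 ≤
            tupleFrac f (iterY y₀ ω i) (fun a => (ω ⟨i, h⟩ ⟨j, h2⟩ a : ℕ)))).decide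
        else false
      else false

theorem iterY_succ {d f : ℕ} {w : ℕ → ℕ} (y₀ : ℕ → Bool)
    (ω : (i : Fin d) → Fin (w ((i : ℕ) + 1)) → Fin f → Fin (w (i : ℕ)))
    (i : Fin d) (j : Fin (w ((i : ℕ) + 1))) :
    iterY y₀ ω ((i : ℕ) + 1) (j : ℕ) = true ↔
      (4 : ℝ) / 5 ≤ tupleFrac f (iterY y₀ ω (i : ℕ)) (fun a => (ω i j a : ℕ)) := by
  rw [iterY]
  simp

theorem iterY_congr {d f : ℕ} {w : ℕ → ℕ} (y₀ : ℕ → Bool)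
    (ω ω' : (i : Fin d) → Fin (w ((i : ℕ) + 1)) → Fin f → Fin (w (i : ℕ))) (i : ℕ)
    (h : ∀ k : Fin d, (k : ℕ) < i → ω k = ω' k) : iterY y₀ ω i = iterY y₀ ω' i := by
  induction i with
  | zero => rfl
  | succ i ih =>
    have ih' := ih fun k hk => h k (by omega)
    funext j
    rw [iterY, iterY, ih']
    by_cases hd : i < d
    · simp only [hd, dite_true]
      rw [h ⟨i, hd⟩ (Nat.lt_succ_self i)]
    · simp [hd]

/-- Any family satisfying the recursion agrees with `iterY` on the first `w i` positions. -/
theorem eq_iterY {d f : ℕ} {w : ℕ → ℕ} (y₀ : ℕ → Bool)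
    (ω : (i : Fin d) → Fin (w ((i : ℕ) + 1)) → Fin f → Fin (w (i : ℕ)))
    (y : ℕ → ℕ → Bool) (h0 : ∀ j, y 0 j = y₀ j)
    (hy : ∀ i : Fin d, ∀ j : Fin (w ((i : ℕ) + 1)),
      (y ((i : ℕ) + 1) (j : ℕ) = true ↔
        (4 : ℝ) / 5 ≤ tupleFrac f (y (i : ℕ)) (fun a => (ω i j a : ℕ)))) (i : ℕ) (hi : i ≤ d) :
    ∀ j < w i, y i j = iterY y₀ ω i j := by
  induction i with
  | zero => intro j _; exact h0 j
  | succ i ih =>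
    intro j hj
    rw [Bool.eq_iff_iff, hy ⟨i, hi⟩ ⟨j, hj⟩, iterY_succ y₀ ω ⟨i, hi⟩ ⟨j, hj⟩]
    have : tupleFrac f (y i) (fun a => (ω ⟨i, hi⟩ ⟨j, hj⟩ a : ℕ))
        = tupleFrac f (iterY y₀ ω i) (fun a => (ω ⟨i, hi⟩ ⟨j, hj⟩ a : ℕ)) := by
      unfold tupleFrac
      congr 1
      refine Finset.sum_congr rfl fun a _ => ?_
      rw [ih (by omega) _ (ω ⟨i, hi⟩ ⟨j, hj⟩ a).2]
    exact iff_of_eq (congrArg (fun z : ℝ => (4 : ℝ) / 5 ≤ z) this)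

theorem fracOn_congr {x y : ℕ → Bool} {W : ℕ} (h : ∀ j < W, x j = y j) :
    fracOn x W = fracOn y W := by
  unfold fracOn
  congr 1
  refine Finset.sum_congr rfl fun j hj => ?_
  rw [h j (Finset.mem_range.1 hj)]

/-! ### The invariant over all layers -/

/-- The invariant holds at `i` and fails at `i + 1` with probability at most `2 ^ (-e)`. -/
theorem prob_bad_le (e d : ℕ) (hd : d ≤ e) (y₀ : ℕ → Bool) (i : Fin d) :
    prob (fun ω : (i : Fin d) → Fin (2 ^ e / 2 ^ ((i : ℕ) + 1)) → Fin 550 →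
          Fin (2 ^ e / 2 ^ (i : ℕ)) =>
        1 - (1 / 10 : ℝ) ^ (2 ^ (i : ℕ)) ≤
            fracOn (iterY (w := fun i => 2 ^ e / 2 ^ i) y₀ ω i) (2 ^ e / 2 ^ (i : ℕ)) ∧
          ¬ 1 - (1 / 10 : ℝ) ^ (2 ^ ((i : ℕ) + 1)) ≤
            fracOn (iterY (w := fun i => 2 ^ e / 2 ^ i) y₀ ω ((i : ℕ) + 1))
              (2 ^ e / 2 ^ ((i : ℕ) + 1)))
      ≤ 1 / 2 ^ e := by
  have hi := i.2
  have hwpos : ∀ k ≤ e, 0 < 2 ^ e / 2 ^ k := fun k hk =>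
    Nat.div_pos (Nat.pow_le_pow_right (by norm_num) hk) (by positivity)
  have : ∀ k : Fin d, Nonempty (Fin (2 ^ e / 2 ^ ((k : ℕ) + 1)) → Fin 550 →
      Fin (2 ^ e / 2 ^ (k : ℕ))) := fun k => ⟨fun _ _ => ⟨0, hwpos k (by omega)⟩⟩
  refine prob_le_of_update _ i _ fun ω => ?_
  have hpast : ∀ v, iterY (w := fun i => 2 ^ e / 2 ^ i) y₀ (Function.update ω i v) i
      = iterY (w := fun i => 2 ^ e / 2 ^ i) y₀ ω i := by
    intro v
    refine iterY_congr _ _ _ _ fun k hk => ?_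
    rw [Function.update_of_ne]
    rintro rfl
    exact lt_irrefl _ hk
  by_cases hx : 1 - (1 / 10 : ℝ) ^ (2 ^ (i : ℕ)) ≤
      fracOn (iterY (w := fun i => 2 ^ e / 2 ^ i) y₀ ω i) (2 ^ e / 2 ^ (i : ℕ))
  · have key := layer_fail_le _ (2 ^ e / 2 ^ (i : ℕ)) (2 ^ e / 2 ^ ((i : ℕ) + 1)) i
      (hwpos i (by omega)) hx
    have hb := layer_bound e i (by omega)
    rw [← Nat.pow_div (by omega) (by norm_num)] at hb
    refine (prob_mono ?_).trans (key.trans hb)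
    rintro v ⟨-, hv⟩
    have hw := hwpos ((i : ℕ) + 1) (by omega)
    rw [fracOn_eq _ hw] at hv
    have hw' : (0 : ℝ) < ((2 ^ e / 2 ^ ((i : ℕ) + 1) : ℕ) : ℝ) := by exact_mod_cast hw
    have hfil : (univ.filter (fun j : Fin (2 ^ e / 2 ^ ((i : ℕ) + 1)) =>
        ¬ iterY (w := fun i => 2 ^ e / 2 ^ i) y₀ (Function.update ω i v) ((i : ℕ) + 1) j = true))
        = (univ.filter (fun j : Fin (2 ^ e / 2 ^ ((i : ℕ) + 1)) =>
            ¬ (4 : ℝ) / 5 ≤ tupleFrac 550 (iterY (w := fun i => 2 ^ e / 2 ^ i) y₀ ω i)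
              (fun a => (v j a : ℕ)))) := by
      refine Finset.filter_congr fun j _ => not_congr ?_
      have := iterY_succ (w := fun i => 2 ^ e / 2 ^ i) y₀ (Function.update ω i v) i j
      rw [hpast, Function.update_self] at this
      exact this
    rw [hfil] at hv
    rw [Nat.succ_le_iff, Nat.floor_lt (by positivity)]
    rw [← pow_mul, ← pow_succ]
    have h3 := lt_of_not_ge (fun hc => hv (sub_le_sub_left hc 1))
    rw [lt_div_iff₀ hw'] at h3
    rw [mul_comm]
    exact h3
  · have : ∀ v, ¬ (1 - (1 / 10 : ℝ) ^ (2 ^ (i : ℕ)) ≤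
      fracOn (iterY (w := fun i => 2 ^ e / 2 ^ i) y₀ (Function.update ω i v) i)
        (2 ^ e / 2 ^ (i : ℕ))) := by
      intro v; rw [hpast]; exact hx
    refine (prob_mono (B := fun _ => False) fun v hv => this v hv.1).trans ?_
    simp [prob]

/-- `d / m ≤ m ^ (-1/4)` for `m = 2 ^ e`, compared after taking fourth powers. -/
theorem final_bound (e d : ℕ) (h : d = 0 ∨ 2 ^ d ≤ e) :
    (d : ℝ) * (1 / 2 ^ e) ≤ ((2 ^ e : ℕ) : ℝ) ^ (-(1 / 4 : ℝ)) := by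
  have hd4 : d ^ 4 ≤ (2 ^ e) ^ 3 := by
    rcases h with rfl | h
    · simp
    · have h1 : d < 2 ^ d := Nat.lt_two_pow_self
      have h2 : 2 * d ≤ 2 ^ d := by
        cases d with
        | zero => simp
        | succ k =>
          have : k < 2 ^ k := Nat.lt_two_pow_self
          rw [pow_succ]; omega
      calc d ^ 4 ≤ (2 ^ d) ^ 4 := Nat.pow_le_pow_left h1.le 4
        _ = 2 ^ (d * 4) := (pow_mul _ _ _).symm
        _ ≤ 2 ^ (e * 3) := Nat.pow_le_pow_right (by norm_num) (by omega)
        _ = (2 ^ e) ^ 3 := pow_mul _ _ _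
  have hm : (0 : ℝ) < ((2 ^ e : ℕ) : ℝ) := by positivity
  have e1 : (((2 ^ e : ℕ) : ℝ) ^ (-(1 / 4 : ℝ))) ^ 4 = (((2 ^ e : ℕ) : ℝ))⁻¹ := by
    rw [← Real.rpow_natCast, ← Real.rpow_mul hm.le, ← Real.rpow_neg_one]
    norm_num
  refine le_of_pow_le_pow_left₀ (n := 4) (by norm_num) (by positivity) ?_
  rw [e1, mul_pow]
  have hd4' : (d : ℝ) ^ 4 ≤ (2 ^ e) ^ 3 := by exact_mod_cast hd4
  calc (d : ℝ) ^ 4 * (1 / 2 ^ e) ^ 4 ≤ (2 ^ e) ^ 3 * (1 / 2 ^ e) ^ 4 := by gcongr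
    _ = (((2 ^ e : ℕ) : ℝ))⁻¹ := by push_cast; field_simp

/-- With `2 ^ d > e / 2` the last bound leaves room for less than one zero. -/
theorem all_ones (e d : ℕ) (hd : d ≤ e) (he : e < 2 ^ (d + 1)) (x : ℕ → Bool)
    (hx : 1 - (1 / 10 : ℝ) ^ (2 ^ d) ≤ fracOn x (2 ^ e / 2 ^ d)) :
    ∀ j < 2 ^ e / 2 ^ d, x j = true := by
  have hw : 0 < 2 ^ e / 2 ^ d :=
    Nat.div_pos (Nat.pow_le_pow_right (by norm_num) hd) (by positivity)
  have hw' : (0 : ℝ) < ((2 ^ e / 2 ^ d : ℕ) : ℝ) := by exact_mod_cast hw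
  intro j hj
  by_contra hc
  rw [fracOn_eq x hw] at hx
  have h1 : 1 ≤ (univ.filter (fun j : Fin (2 ^ e / 2 ^ d) => ¬ x j = true)).card :=
    Finset.card_pos.2 ⟨⟨j, hj⟩, by simpa using hc⟩
  have h1' : (1 : ℝ) ≤ ((univ.filter (fun j : Fin (2 ^ e / 2 ^ d) => ¬ x j = true)).card : ℝ) := by
    exact_mod_cast h1
  have h2 : ((univ.filter (fun j : Fin (2 ^ e / 2 ^ d) => ¬ x j = true)).card : ℝ)
      / ((2 ^ e / 2 ^ d : ℕ) : ℝ) ≤ (1 / 10 : ℝ) ^ (2 ^ d) := by linarith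
  rw [div_le_iff₀ hw'] at h2
  have h3 : ((2 ^ e / 2 ^ d : ℕ) : ℝ) ≤ 2 ^ e := by
    exact_mod_cast Nat.div_le_self _ _
  have h4 : (1 / 10 : ℝ) ^ (2 ^ d) ≤ (1 / 8 : ℝ) ^ (2 ^ d) := by gcongr; norm_num
  have h5 : (1 / 8 : ℝ) ^ (2 ^ d) * 2 ^ e < 1 := by
    rw [one_div_pow, one_div_mul_eq_div, div_lt_one (by positivity)]
    rw [show (8 : ℝ) = 2 ^ 3 by norm_num, ← pow_mul]
    refine pow_lt_pow_right₀ (by norm_num) ?_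
    have : 0 < 2 ^ d := by positivity
    rw [pow_succ] at he
    omega
  have h6 : (1 / 10 : ℝ) ^ (2 ^ d) * ((2 ^ e / 2 ^ d : ℕ) : ℝ) ≤ (1 / 8 : ℝ) ^ (2 ^ d) * 2 ^ e := by
    gcongr
  linarith

open Classical in
theorem stmt_6 :
    ∃ f m₀ : ℕ, 0 < f ∧ 0 < m₀ ∧
      ∀ m : ℕ, (∃ e : ℕ, m = 2 ^ e) → m₀ ≤ m →
        ∀ y₀ : ℕ → Bool, 9 / 10 ≤ fracOn y₀ m →
          1 - (m : ℝ) ^ (-(1 / 4 : ℝ)) ≤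
            prob (Ω := (i : Fin (Nat.log 2 (Nat.log 2 m))) →
                Fin (m / 2 ^ ((i : ℕ) + 1)) → Fin f → Fin (m / 2 ^ (i : ℕ)))
              (fun ω =>
                ∀ y : ℕ → ℕ → Bool,
                  (∀ j, y 0 j = y₀ j) →
                  (∀ i : Fin (Nat.log 2 (Nat.log 2 m)),
                    ∀ j : Fin (m / 2 ^ ((i : ℕ) + 1)),
                      (y ((i : ℕ) + 1) (j : ℕ) = true ↔
                        (4 : ℝ) / 5 ≤ tupleFrac f (y (i : ℕ)) (fun a => (ω i j a : ℕ)))) →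
                  ((∀ i ≤ Nat.log 2 (Nat.log 2 m),
                      1 - ((1 : ℝ) / 10) ^ (2 ^ i) ≤ fracOn (y i) (m / 2 ^ i)) ∧
                    (∀ j < m / 2 ^ (Nat.log 2 (Nat.log 2 m)),
                      y (Nat.log 2 (Nat.log 2 m)) j = true))) := by
  refine ⟨550, 1, by norm_num, by norm_num, ?_⟩
  rintro m ⟨e, rfl⟩ - y₀ hy₀
  have hlog : Nat.log 2 (2 ^ e) = e := Nat.log_pow (by norm_num) e
  rw [hlog]
  have hlt : e < 2 ^ (Nat.log 2 e + 1) := Nat.lt_pow_succ_log_self (by norm_num) e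
  have hle : Nat.log 2 e ≤ e := Nat.log_le_self 2 e
  have hd : Nat.log 2 e = 0 ∨ 2 ^ Nat.log 2 e ≤ e := by
    rcases Nat.eq_zero_or_pos e with rfl | he
    · left; simp
    · right; exact Nat.pow_log_le_self 2 he.ne'
  generalize Nat.log 2 e = d at *
  have hwpos : ∀ k ≤ e, 0 < 2 ^ e / 2 ^ k := fun k hk =>
    Nat.div_pos (Nat.pow_le_pow_right (by norm_num) hk) (by positivity)
  have : Nonempty ((i : Fin d) → Fin (2 ^ e / 2 ^ ((i : ℕ) + 1)) → Fin 550 →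
      Fin (2 ^ e / 2 ^ (i : ℕ))) := ⟨fun i _ _ => ⟨0, hwpos i (by have := i.2; omega)⟩⟩
  have hsum := Finset.sum_le_sum fun (i : Fin d) (_ : i ∈ univ) => prob_bad_le e d hle y₀ i
  rw [Finset.sum_const, Finset.card_univ, Fintype.card_fin, nsmul_eq_mul] at hsum
  refine le_trans (sub_le_sub_left (hsum.trans (final_bound e d hd)) 1) ?_
  refine prob_union_bound _ _ fun ω => ?_
  contrapose!
  intro hgood y h0 hy
  have heq := eq_iterY (w := fun i => 2 ^ e / 2 ^ i) y₀ ω y h0 hy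
  have hinv : ∀ i ≤ d, 1 - ((1 : ℝ) / 10) ^ (2 ^ i) ≤
      fracOn (iterY (w := fun i => 2 ^ e / 2 ^ i) y₀ ω i) (2 ^ e / 2 ^ i) := by
    intro i
    induction i with
    | zero =>
      intro _
      have : fracOn (iterY (w := fun i => 2 ^ e / 2 ^ i) y₀ ω 0) (2 ^ e / 2 ^ 0)
          = fracOn y₀ (2 ^ e) := by rw [iterY]; simp
      rw [this]
      norm_num at hy₀ ⊢
      exact hy₀
    | succ i ih =>
      intro hi
      exact hgood ⟨i, hi⟩ (ih (by omega))
  have hinv' : ∀ i ≤ d, 1 - ((1 : ℝ) / 10) ^ (2 ^ i) ≤ fracOn (y i) (2 ^ e / 2 ^ i) := by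
    intro i hi
    rw [fracOn_congr (heq i hi)]
    exact hinv i hi
  exact ⟨hinv', all_ones e d hle hlt (y d) (hinv' d le_rfl)⟩
end

section
/- There exists a positive integer f₀ such that for every integer f ≥ f₀ and every even integer W ≥ 2 the following holds. Choose W/2 tuples S₁, …, S_{W/2} ∈ {1,…,W}^f independently and uniformly at random (each tuple's f entries sampled with replacement). Then with probability at least 1 − 2^{−W}, for every string y ∈ {0,1}^W with ȳ ≤ 7/10, the fraction of indices j ∈ {1,…,W/2} such that the fraction of ones among the f bits y(S_j(1)), …, y(S_j(f)) is at least 4/5, is at most 6/10. -/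
/-!
The proof applies the same exponential-moment (Chernoff) estimate, `card_tail_mul_le`, twice and
finishes with a union bound; probabilities are written as cardinalities throughout.

Fix `y` with at most `7/10` ones. For one tuple of length `f`, the number `K` of sampled ones has
`E[2^K] ≤ (17/10)^f`, while `K ≥ 4f/5` forces `2^K ≥ (87/50)^f` because `(87/50)^5 ≤ 2^4`.
Hence a tuple is bad with probability at most `(85/87)^f ≤ 2⁻¹⁰` once `f ≥ 300`
(`card_bad_tuple_le`). Among `m = W/2` independent tuples, the number `B` of bad ones then satisfies
`E[1024^B] ≤ 2^m`, and `B > 6m/10` forces `1024^B ≥ 64^m`, so this has probability at most `32^{-m}`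
(`card_many_bad_le`). There are `2^W = 4^m` strings `y`, and `4^m · 32^{-m} ≤ 4^{-m} = 2^{-W}`.
-/

open Finset

open Classical in
/-- Chernoff bound in counting form: Markov's inequality for `t ^ #{i | P (g i)}`, where
`g : Fin n → Ω` is uniform, so that the expectation factors over the coordinates. -/
lemma card_tail_mul_le {Ω : Type*} [Fintype Ω] (n : ℕ) (P : Ω → Prop) (t T : ℝ) (ht : 1 ≤ t) :
    ((univ.filter (fun g : Fin n → Ω =>
        T ≤ t ^ (univ.filter (fun i => P (g i))).card)).card : ℝ) * T ≤
      (Fintype.card Ω + (t - 1) * (univ.filter P).card) ^ n := by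
  have hsum : ((Fintype.card Ω : ℝ) + (t - 1) * (univ.filter P).card)
      = ∑ a : Ω, (if P a then t else 1) := by
    have h : ∀ a : Ω, (if P a then t else 1) = 1 + (t - 1) * (if P a then (1 : ℝ) else 0) := by
      intro a; split_ifs <;> ring
    simp only [h, sum_add_distrib, ← mul_sum, sum_boole]
    simp
  rw [hsum, Fintype.sum_pow, ← nsmul_eq_mul]
  have hprod : ∀ g : Fin n → Ω, ∏ i, (if P (g i) then t else 1)
      = t ^ (univ.filter (fun i => P (g i))).card := by
    intro g
    rw [prod_ite]; simp
  simp only [hprod]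
  calc _ ≤ ∑ g ∈ univ.filter (fun g : Fin n → Ω =>
        T ≤ t ^ (univ.filter (fun i => P (g i))).card),
          t ^ (univ.filter (fun i => P (g i))).card :=
        card_nsmul_le_sum _ _ _ (fun g hg => (mem_filter.mp hg).2)
    _ ≤ _ := sum_le_sum_of_subset_of_nonneg (filter_subset _ _)
        (fun g _ _ => pow_nonneg (by linarith) _)

/-- A tuple `s` is bad for `y` if `y` has at least a `4/5` fraction of ones along `s`. -/
def BadTuple {f W : ℕ} (y : Fin W → Bool) (s : Fin f → Fin W) : Prop :=
  (4 : ℝ) / 5 ≤ (∑ a : Fin f, if y (s a) then (1 : ℝ) else 0) / f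

open Classical in
lemma card_bad_tuple_le {f W : ℕ} (hf : 300 ≤ f) (hW : 0 < W) (y : Fin W → Bool)
    (hy : frac y ≤ 7 / 10) :
    1024 * ((univ.filter (fun s : Fin f → Fin W => BadTuple y s)).card : ℝ) ≤ (W : ℝ) ^ f := by
  have hW' : (0 : ℝ) < W := by exact_mod_cast hW
  have hf' : (0 : ℝ) < f := by exact_mod_cast (by omega : 0 < f)
  have hones : ((univ.filter (fun i => y i = true)).card : ℝ) ≤ 7 / 10 * W := by
    unfold frac at hy
    rw [div_le_iff₀ hW', sum_boole] at hy
    exact hy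
  have key := card_tail_mul_le (Ω := Fin W) f (fun i => y i = true) 2 ((87 / 50) ^ f) (by norm_num)
  have hsub : (univ.filter (fun s : Fin f → Fin W => BadTuple y s)).card ≤
      (univ.filter (fun g : Fin f → Fin W => ((87 : ℝ) / 50) ^ f ≤
        2 ^ (univ.filter (fun i => y (g i) = true)).card)).card := by
    apply card_le_card
    intro s hs
    replace hs := (mem_filter.mp hs).2
    refine mem_filter.mpr ⟨mem_univ _, ?_⟩
    unfold BadTuple at hs
    rw [le_div_iff₀ hf', sum_boole] at hs
    set K := (univ.filter (fun i => y (s i) = true)).card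
    have hK : 4 * f ≤ 5 * K := by
      have : (4 : ℝ) * f ≤ 5 * K := by linarith
      exact_mod_cast this
    -- Fifth powers avoid the irrational threshold `2 ^ (4/5)`.
    refine le_of_pow_le_pow_left₀ (n := 5) (by norm_num) (by positivity) ?_
    calc (((87 : ℝ) / 50) ^ f) ^ 5 = ((87 / 50) ^ 5) ^ f := by rw [← pow_mul, ← pow_mul, mul_comm]
      _ ≤ (2 ^ 4) ^ f := by gcongr; norm_num
      _ = 2 ^ (4 * f) := by rw [← pow_mul]
      _ ≤ 2 ^ (5 * K) := pow_le_pow_right₀ (by norm_num) hK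
      _ = (2 ^ K) ^ 5 := by rw [← pow_mul, mul_comm]
  have hsmall : 1024 * ((85 : ℝ) / 87) ^ f ≤ 1 := by
    calc 1024 * ((85 : ℝ) / 87) ^ f ≤ 1024 * ((85 : ℝ) / 87) ^ 300 :=
          mul_le_mul_of_nonneg_left
            (pow_le_pow_of_le_one (by norm_num) (by norm_num) hf) (by norm_num)
      _ = 1024 * (((85 : ℝ) / 87) ^ 30) ^ 10 := by rw [← pow_mul]
      _ ≤ 1024 * (1 / 2) ^ 10 := by gcongr; norm_num
      _ ≤ 1 := by norm_num
  set b := ((univ.filter (fun s : Fin f → Fin W => BadTuple y s)).card : ℝ)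
  have hpos : (0 : ℝ) < (87 / 50) ^ f := by positivity
  have h1 : b * (87 / 50) ^ f ≤ (17 / 10 * W) ^ f := by
    refine le_trans (mul_le_mul_of_nonneg_right (Nat.cast_le.mpr ?_) hpos.le) (key.trans ?_)
    · convert hsub
    · rw [Fintype.card_fin, show (2 : ℝ) - 1 = 1 by norm_num, one_mul]
      refine pow_le_pow_left₀ (by positivity) ?_ f
      have h : ((univ.filter (fun i => y i = true)).card : ℝ) ≤ 17 / 10 * W - W := by linarith
      rw [← le_sub_iff_add_le']
      -- The two cardinalities differ only in their decidability instances.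
      refine le_trans (le_of_eq ?_) h
      congr!
  have h2 : ((17 : ℝ) / 10 * W) ^ f = (85 / 87) ^ f * W ^ f * (87 / 50) ^ f := by
    rw [← mul_pow, ← mul_pow]; congr 1; ring
  rw [h2] at h1
  have h3 := le_of_mul_le_mul_right h1 hpos
  have hWf : (0 : ℝ) ≤ (W : ℝ) ^ f := by positivity
  nlinarith

open Classical in
/-- If `P` has density at most `2⁻¹⁰` in `Ω`, then at most a `32^{-m}` fraction of the `m`-tuples
over `Ω` have more than `6m/10` entries satisfying `P`. -/
lemma card_many_bad_le {Ω : Type*} [Fintype Ω] (m : ℕ) (P : Ω → Prop)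
    (hP : 1024 * ((univ.filter P).card : ℝ) ≤ Fintype.card Ω) :
    ((univ.filter (fun S : Fin m → Ω =>
        6 * m < 10 * (univ.filter (fun j => P (S j))).card)).card : ℝ) * 32 ^ m ≤
      (Fintype.card Ω : ℝ) ^ m := by
  have key := card_tail_mul_le m P 1024 (64 ^ m) (by norm_num)
  have hsub : (univ.filter (fun S : Fin m → Ω =>
        6 * m < 10 * (univ.filter (fun j => P (S j))).card)).card ≤
      (univ.filter (fun g : Fin m → Ω => (64 : ℝ) ^ m ≤
        1024 ^ (univ.filter (fun i => P (g i))).card)).card := by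
    apply card_le_card
    intro S hS
    simp only [mem_filter, mem_univ, true_and] at hS ⊢
    rw [show (64 : ℝ) = 2 ^ 6 by norm_num, show (1024 : ℝ) = 2 ^ 10 by norm_num,
      ← pow_mul, ← pow_mul]
    exact pow_le_pow_right₀ (by norm_num) hS.le
  set b := ((univ.filter (fun S : Fin m → Ω =>
        6 * m < 10 * (univ.filter (fun j => P (S j))).card)).card : ℝ)
  have h1 : b * 64 ^ m ≤ (2 * (Fintype.card Ω : ℝ)) ^ m := by
    refine le_trans (mul_le_mul_of_nonneg_right (Nat.cast_le.mpr hsub) (by positivity))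
      (key.trans ?_)
    have : (0 : ℝ) ≤ (univ.filter P).card := by positivity
    apply pow_le_pow_left₀
    · positivity
    · linarith
  rw [show (64 : ℝ) = 32 * 2 by norm_num, mul_pow, mul_pow, ← mul_assoc, mul_comm (2 ^ m : ℝ)] at h1
  exact le_of_mul_le_mul_right h1 (by positivity)

open Classical in
theorem stmt_7 :
    ∃ f₀ : ℕ, 0 < f₀ ∧
      ∀ f : ℕ, f₀ ≤ f → ∀ W : ℕ, 2 ≤ W → 2 ∣ W →
        1 - ((1 : ℝ) / 2) ^ W ≤
          prob (Ω := Fin (W / 2) → Fin f → Fin W)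
            (fun S =>
              ∀ y : Fin W → Bool, frac y ≤ 7 / 10 →
                ((univ.filter (fun j : Fin (W / 2) =>
                    (4 : ℝ) / 5 ≤
                      (∑ a : Fin f, if y (S j a) then (1 : ℝ) else 0) / f)).card : ℝ)
                  / ((W / 2 : ℕ) : ℝ) ≤ 6 / 10) := by
  refine ⟨300, by norm_num, fun f hf W hW2 hWe => ?_⟩
  obtain ⟨m, rfl⟩ := hWe
  have hm : 0 < m := by omega
  have hm' : (0 : ℝ) < m := by exact_mod_cast hm
  have hdiv : 2 * m / 2 = m := by omega
  rw [hdiv]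
  unfold prob
  set E : (Fin m → Fin f → Fin (2 * m)) → Prop := fun S =>
    ∀ y : Fin (2 * m) → Bool, frac y ≤ 7 / 10 →
      ((univ.filter (fun j : Fin m => (4 : ℝ) / 5 ≤
        (∑ a : Fin f, if y (S j a) then (1 : ℝ) else 0) / f)).card : ℝ) / (m : ℝ) ≤ 6 / 10 with hE
  set N : ℝ := (Fintype.card (Fin m → Fin f → Fin (2 * m)) : ℝ) with hN
  have hNe : N = (Fintype.card (Fin f → Fin (2 * m)) : ℝ) ^ m := by
    rw [hN]; simp
  have hNpos : 0 < N := by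
    rw [hNe]; simp; positivity
  have hsplit : ((univ.filter E).card : ℝ) + ((univ.filter (fun S => ¬ E S)).card : ℝ) = N := by
    rw [hN, ← card_univ]
    exact_mod_cast card_filter_add_card_filter_not (s := univ) E
  set B : (Fin (2 * m) → Bool) → Finset (Fin m → Fin f → Fin (2 * m)) := fun y =>
    univ.filter (fun S => 6 * m < 10 * (univ.filter (fun j => BadTuple y (S j))).card) with hB
  set Y : Finset (Fin (2 * m) → Bool) := univ.filter (fun y => frac y ≤ 7 / 10) with hY
  have hunion : univ.filter (fun S => ¬ E S) ⊆ Y.biUnion B := by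
    intro S hS
    simp only [mem_filter, mem_univ, true_and, hE, not_forall, not_le] at hS
    obtain ⟨y, hy, hS⟩ := hS
    simp only [mem_biUnion, hY, hB, mem_filter, mem_univ, true_and]
    refine ⟨y, hy, ?_⟩
    rw [lt_div_iff₀ hm'] at hS
    have h : (6 : ℝ) * m < 10 * ((univ.filter (fun j => BadTuple y (S j))).card : ℝ) := by
      unfold BadTuple
      linarith
    exact_mod_cast h
  have hBy : ∀ y ∈ Y, ((B y).card : ℝ) ≤ N / 32 ^ m := by
    intro y hy
    rw [le_div_iff₀ (by positivity), hNe]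
    refine card_many_bad_le m (fun s => BadTuple y s) ?_
    have := card_bad_tuple_le hf (by omega) y (mem_filter.mp hy).2
    simpa using this
  have hYc : (Y.card : ℝ) ≤ 4 ^ m := by
    have h : Y.card ≤ 4 ^ m := by
      refine (card_le_univ Y).trans ?_
      simp [pow_mul]
    exact_mod_cast h
  have hbad : ((univ.filter (fun S => ¬ E S)).card : ℝ) ≤ (1 / 2) ^ (2 * m) * N := by
    calc ((univ.filter (fun S => ¬ E S)).card : ℝ) ≤ ((Y.biUnion B).card : ℝ) := by
          exact_mod_cast card_le_card hunion
      _ ≤ ∑ y ∈ Y, ((B y).card : ℝ) := by exact_mod_cast card_biUnion_le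
      _ ≤ Y.card * (N / 32 ^ m) := by
          rw [← nsmul_eq_mul]; exact sum_le_card_nsmul _ _ _ hBy
      _ ≤ 4 ^ m * (N / 32 ^ m) := by gcongr
      _ = (1 / 8) ^ m * N := by
          rw [show (32 : ℝ) = 4 * 8 by norm_num, mul_pow, div_pow, one_pow]
          field_simp
      _ ≤ (1 / 2) ^ (2 * m) * N := by
          rw [pow_mul]; gcongr; norm_num
  rw [le_div_iff₀ hNpos]
  have hgood : (1 - (1 / 2) ^ (2 * m)) * N ≤ ((univ.filter E).card : ℝ) := by linarith
  -- The two cardinalities differ only in their decidability instances.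
  refine hgood.trans (le_of_eq ?_)
  congr!
end

section
/- For all constants s, ε ∈ (0,1) there exists a positive integer k₀ such that for every integer k ≥ k₀, every positive integers n and m, and every family of Boolean functions C₁, …, C_m : {0,1}^n → {0,1} such that every assignment x ∈ {0,1}^n satisfies at most s·m of the functions (i.e. #{j : C_j(x) = 1} ≤ s·m for every x), the following holds. Choose S₁, …, S_n independently, each uniformly at random in {1,…,m}^k (the k entries sampled with replacement), and for x ∈ {0,1}^n define B_i(x) = 1 iff #{a ∈ {1,…,k} : C_{S_i(a)}(x) = 1} ≥ s(1 + ε/2)·k. Then the probability that there exists x ∈ {0,1}^n with B_i(x) = 1 for at least n/2 of the indices i ∈ {1,…,n} is at most 2^{−n}. -/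
/-!
Two nested exponential-moment (Chernoff) bounds and a union bound prove the theorem. For uniform
independent samples `f i` from a finite set and a predicate `P`, Markov's inequality applied to
`exp (u * #{i | P (f i)})` gives `card_tail_mul_exp_le`.

* Applied to the `k` entries of one tuple with `u = ε / 4`, it shows that, for a fixed `x`, a uniform
  tuple is bad (its hit count is at least `s (1 + ε / 2) k`) with probability at most
  `exp (-s ε² k / 16)`, which is at most `1 / 64` for large `k` (`card_bad_tuples_le`).
* Applied to the `n` tuples with `exp u = 64`, it shows that, for a fixed `x`, at least half of the
  tuples are bad with probability at most `(1 + 63 / 64) ^ n / 8 ^ n ≤ 4⁻ⁿ` (`card_half_bad_le`).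

The union bound over the `2 ^ n` assignments `x` leaves `2 ^ n * 4⁻ⁿ = 2⁻ⁿ`. Everything is phrased by
counting, since the underlying distributions are uniform.
-/

open Finset

open Classical in
/-- Chernoff's bound in counting form: the exponential moment of the number of `i` with `P (f i)`
factors over the coordinates, and Markov's inequality is applied to it. -/
theorem card_tail_mul_exp_le {α : Type*} [Fintype α] (P : α → Prop) (k : ℕ) {u : ℝ} (hu : 0 ≤ u)
    (t : ℝ) :
    ((univ.filter (fun f : Fin k → α =>
        t ≤ ((univ.filter (fun i : Fin k => P (f i))).card : ℝ))).card : ℝ) * Real.exp (u * t)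
      ≤ (Fintype.card α + (Real.exp u - 1) * ((univ.filter P).card : ℝ)) ^ k := by
  have h1 : (Fintype.card α + (Real.exp u - 1) * ((univ.filter P).card : ℝ))
      = ∑ a : α, (if P a then Real.exp u else 1) := by
    have : ∀ a : α, (if P a then Real.exp u else 1)
        = 1 + (Real.exp u - 1) * (if P a then (1 : ℝ) else 0) := by
      intro a; split_ifs <;> ring
    rw [Finset.sum_congr rfl (fun a _ => this a), Finset.sum_add_distrib, ← Finset.mul_sum]
    simp
  have h2 : ∀ f : Fin k → α, (∏ i, (if P (f i) then Real.exp u else 1))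
      = Real.exp (u * ((univ.filter (fun i : Fin k => P (f i))).card : ℝ)) := by
    intro f
    rw [Finset.prod_ite, Finset.prod_const, Finset.prod_const_one, mul_one, ← Real.exp_nat_mul,
      mul_comm]
  rw [h1, Fintype.sum_pow, ← nsmul_eq_mul]
  refine le_trans (Finset.card_nsmul_le_sum _
    (fun f : Fin k → α => ∏ i, (if P (f i) then Real.exp u else 1)) _ ?_) ?_
  · intro f hf
    rw [h2]
    exact Real.exp_le_exp.mpr (mul_le_mul_of_nonneg_left (Finset.mem_filter.mp hf).2 hu)
  · refine Finset.sum_le_sum_of_subset_of_nonneg (Finset.subset_univ _) (fun f _ _ => ?_)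
    rw [h2]
    positivity

open Classical in
/-- If `P` has density at most `s`, then for `k` large at most a `1 / 64` fraction of the `k`-tuples
have at least `s (1 + ε / 2) k` entries in `P`. -/
theorem card_bad_tuples_le {α : Type*} [Fintype α] (P : α → Prop) {s ε : ℝ}
    (hs : s ∈ Set.Ioo (0 : ℝ) 1) (hε : ε ∈ Set.Ioo (0 : ℝ) 1) {k : ℕ}
    (hk : 1024 / (s * ε ^ 2) ≤ k) (hP : ((univ.filter P).card : ℝ) ≤ s * Fintype.card α) :
    64 * ((univ.filter (fun f : Fin k → α =>
        s * (1 + ε / 2) * k ≤ ((univ.filter (fun i : Fin k => P (f i))).card : ℝ))).card : ℝ)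
      ≤ (Fintype.card α : ℝ) ^ k := by
  obtain ⟨hs0, hs1⟩ := hs
  obtain ⟨he0, he1⟩ := hε
  have hu : (0 : ℝ) ≤ ε / 4 := by positivity
  have key := card_tail_mul_exp_le P k hu (s * (1 + ε / 2) * k)
  set A : ℝ := ((univ.filter (fun f : Fin k → α =>
        s * (1 + ε / 2) * k ≤ ((univ.filter (fun i : Fin k => P (f i))).card : ℝ))).card : ℝ)
  set N : ℝ := (Fintype.card α : ℝ)
  have hA : 0 ≤ A := Nat.cast_nonneg _
  have hN : 0 ≤ N := Nat.cast_nonneg _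
  have hexp : Real.exp (ε / 4) - 1 ≤ ε / 4 + (ε / 4) ^ 2 := by
    have h := Real.abs_exp_sub_one_sub_id_le (x := ε / 4) (by rw [abs_of_nonneg hu]; linarith)
    linarith [(abs_le.mp h).2]
  have hexp0 : 0 ≤ Real.exp (ε / 4) - 1 := by linarith [Real.add_one_le_exp (ε / 4)]
  have hbase : N + (Real.exp (ε / 4) - 1) * ((univ.filter P).card : ℝ)
      ≤ N * Real.exp (s * (ε / 4 + (ε / 4) ^ 2)) := by
    have h1 : (Real.exp (ε / 4) - 1) * ((univ.filter P).card : ℝ)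
        ≤ (ε / 4 + (ε / 4) ^ 2) * (s * N) :=
      mul_le_mul hexp hP (Nat.cast_nonneg _) (by positivity)
    have h2 := mul_le_mul_of_nonneg_left (Real.add_one_le_exp (s * (ε / 4 + (ε / 4) ^ 2))) hN
    linarith
  have hpow := (key.trans (pow_le_pow_left₀ (by positivity) hbase k))
  rw [mul_pow, ← Real.exp_nat_mul] at hpow
  -- The two exponents differ by `s ε² k / 16`.
  have hsplit : ε / 4 * (s * (1 + ε / 2) * k)
      = s * ε ^ 2 * k / 16 + k * (s * (ε / 4 + (ε / 4) ^ 2)) := by ring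
  rw [hsplit, Real.exp_add, ← mul_assoc] at hpow
  have hmain := le_of_mul_le_mul_right hpow (Real.exp_pos _)
  have h64 : (64 : ℝ) ≤ Real.exp (s * ε ^ 2 * k / 16) := by
    have h1 : 1024 ≤ k * (s * ε ^ 2) := (div_le_iff₀ (by positivity)).mp hk
    linarith [Real.add_one_le_exp (s * ε ^ 2 * k / 16)]
  calc 64 * A = A * 64 := mul_comm _ _
    _ ≤ A * Real.exp (s * ε ^ 2 * k / 16) := mul_le_mul_of_nonneg_left h64 hA
    _ ≤ N ^ k := hmain

open Classical in
/-- If a set `Q` has density at most `1 / 64`, then at most a `4⁻ⁿ` fraction of the `n`-tuples have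
at least half of their entries in `Q`. -/
theorem card_half_bad_le {β : Type*} [Fintype β] (Q : β → Prop) (n : ℕ)
    (hQ : 64 * ((univ.filter Q).card : ℝ) ≤ Fintype.card β) :
    ((univ.filter (fun S : Fin n → β =>
        (n : ℝ) / 2 ≤ ((univ.filter (fun i : Fin n => Q (S i))).card : ℝ))).card : ℝ) * 4 ^ n
      ≤ (Fintype.card β : ℝ) ^ n := by
  have h8 : Real.exp (Real.log 8) = 8 := Real.exp_log (by norm_num)
  have h64 : Real.exp (2 * Real.log 8) = 64 := by
    rw [two_mul, Real.exp_add, h8]; norm_num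
  have hu : 0 ≤ 2 * Real.log 8 := by
    have := Real.log_nonneg (show (1 : ℝ) ≤ 8 by norm_num)
    positivity
  have key := card_tail_mul_exp_le Q n hu ((n : ℝ) / 2)
  have hexp : Real.exp (2 * Real.log 8 * ((n : ℝ) / 2)) = 4 ^ n * 2 ^ n := by
    rw [show 2 * Real.log 8 * ((n : ℝ) / 2) = n * Real.log 8 by ring, Real.exp_nat_mul, h8,
      ← mul_pow]
    norm_num
  rw [hexp, h64, ← mul_assoc] at key
  have h2 : (Fintype.card β + (64 - 1) * ((univ.filter Q).card : ℝ)) ^ n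
      ≤ (Fintype.card β : ℝ) ^ n * 2 ^ n := by
    rw [← mul_pow]
    refine pow_le_pow_left₀ (by positivity) ?_ n
    have : (0 : ℝ) ≤ ((univ.filter Q).card : ℝ) := Nat.cast_nonneg _
    linarith
  exact le_of_mul_le_mul_right (key.trans h2) (by positivity)

open Classical in
theorem stmt_9 :
    ∀ s ε : ℝ, s ∈ Set.Ioo (0 : ℝ) 1 → ε ∈ Set.Ioo (0 : ℝ) 1 →
      ∃ k₀ : ℕ, 0 < k₀ ∧
        ∀ k : ℕ, k₀ ≤ k → ∀ n m : ℕ, 0 < n → 0 < m →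
          ∀ C : Fin m → (Fin n → Bool) → Bool,
            (∀ x : Fin n → Bool,
              ((univ.filter (fun j : Fin m => C j x = true)).card : ℝ) ≤ s * m) →
            prob (Ω := Fin n → Fin k → Fin m)
              (fun S =>
                ∃ x : Fin n → Bool,
                  (n : ℝ) / 2 ≤
                    ((univ.filter (fun i : Fin n =>
                        s * (1 + ε / 2) * k ≤
                          ((univ.filter
                            (fun a : Fin k => C (S i a) x = true)).card : ℝ))).card : ℝ))
              ≤ ((1 : ℝ) / 2) ^ n := by
  intro s ε hs hε
  refine ⟨⌈1024 / (s * ε ^ 2)⌉₊, Nat.ceil_pos.mpr ?_, ?_⟩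
  · have := hs.1
    have := hε.1
    positivity
  intro k hk n m _ hm C hC
  have hk' : 1024 / (s * ε ^ 2) ≤ (k : ℝ) := Nat.ceil_le.mp hk
  unfold prob
  have hcard : (Fintype.card (Fin n → Fin k → Fin m) : ℝ) = ((m : ℝ) ^ k) ^ n := by
    simp
  have hm' : (0 : ℝ) < m := by exact_mod_cast hm
  rw [hcard, div_le_iff₀ (by positivity)]
  set E : (Fin n → Bool) → Finset (Fin n → Fin k → Fin m) := fun x =>
    univ.filter (fun S => (n : ℝ) / 2 ≤ ((univ.filter (fun i : Fin n =>
      s * (1 + ε / 2) * k ≤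
        ((univ.filter (fun a : Fin k => C (S i a) x = true)).card : ℝ))).card : ℝ)) with hE
  have hEx : ∀ x, ((E x).card : ℝ) ≤ ((m : ℝ) ^ k) ^ n / 4 ^ n := by
    intro x
    rw [le_div_iff₀ (by positivity)]
    have h1 := card_bad_tuples_le (fun j : Fin m => C j x = true) hs hε hk'
      (by rw [Fintype.card_fin]; convert hC x)
    have h2 := card_half_bad_le (fun f : Fin k → Fin m => s * (1 + ε / 2) * k ≤
        ((univ.filter (fun a : Fin k => C (f a) x = true)).card : ℝ)) n
      (by
        refine le_trans (le_of_eq ?_) (h1.trans (le_of_eq ?_))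
        · congr!
        · simp)
    refine le_trans (le_of_eq ?_) (h2.trans (le_of_eq ?_))
    · rw [hE]
    · simp
  have hunion : (((univ.filter (fun S : Fin n → Fin k → Fin m => ∃ x : Fin n → Bool,
      (n : ℝ) / 2 ≤ ((univ.filter (fun i : Fin n =>
        s * (1 + ε / 2) * k ≤
          ((univ.filter (fun a : Fin k => C (S i a) x = true)).card : ℝ))).card : ℝ))).card : ℕ) : ℝ)
      ≤ ∑ x, ((E x).card : ℝ) := by
    rw [← Nat.cast_sum, Nat.cast_le]
    refine le_trans (Finset.card_le_card ?_) Finset.card_biUnion_le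
    intro S hS
    obtain ⟨x, hx⟩ := (Finset.mem_filter.mp hS).2
    exact Finset.mem_biUnion.mpr ⟨x, Finset.mem_univ _, Finset.mem_filter.mpr ⟨Finset.mem_univ _, hx⟩⟩
  refine le_trans (le_of_eq (by congr!)) (hunion.trans ((Finset.sum_le_sum (fun x _ => hEx x)).trans (le_of_eq ?_)))
  rw [Finset.sum_const, nsmul_eq_mul, Finset.card_univ, Fintype.card_fun, Fintype.card_bool,
    Fintype.card_fin, show (4 : ℝ) = 2 * 2 by norm_num, mul_pow, one_div, inv_pow]
  push_cast
  field_simp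
end

section
/- For all constants s ∈ (0,1) and ε ∈ (0, 1/100) there exists a positive integer k₀ such that for every integer k ≥ k₀, every positive integers n and m, every family of Boolean functions C₁, …, C_m : {0,1}^n → {0,1}, and every assignment x* ∈ {0,1}^n with #{j : C_j(x*) = 1} ≥ s(1 + ε)·m, the following holds. Choose S₁, …, S_n independently, each uniformly at random in {1,…,m}^k (the k entries sampled with replacement), and define B_i(x*) = 1 iff #{a ∈ {1,…,k} : C_{S_i(a)}(x*) = 1} ≥ s(1 + ε/2)·k. Then the probability that B_i(x*) = 1 for all i ∈ {1,…,n} is at least 2^{−n/k}. -/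
/-!
The event factors over the `n` independent coordinates, so its probability is the `n`-th power of
the probability that a single tuple `g` of `k` random clauses contains at least `s(1 + ε/2)k`
clauses satisfied by `x*`. A single tuple fails with probability at most `exp(-ck)`, where
`c = sε²/32`: this is the Chernoff bound for the lower tail, obtained by counting tuples with weight
`exp(-t · #satisfied)` at `t = ε/4` (`chernoff_card`). Chebyshev's inequality, whose tail of
order `1/k` has a constant that grows as `ε` shrinks, would not suffice, since the target
`2^(-1/k)` is about `1 - (log 2)/k`; an exponentially small tail is below that margin
as soon as `c²k ≥ 4` (`two_rpow_le_one_sub_exp`).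
-/

open Finset

/-- The moment generating function of the number of hits of `P` in a uniform `k`-tuple, multiplied
by the number of tuples. -/
lemma sum_exp_count {β : Type*} [Fintype β] (P : β → Prop) [DecidablePred P]
    (k : ℕ) (t : ℝ) :
    ∑ g : Fin k → β, Real.exp (-t * ((univ.filter (fun a => P (g a))).card : ℝ)) =
      ((Fintype.card β : ℝ) - ((univ.filter P).card : ℝ) * (1 - Real.exp (-t))) ^ k := by
  have h1 : (Fintype.card β : ℝ) - ((univ.filter P).card : ℝ) * (1 - Real.exp (-t)) =
      ∑ j : β, (if P j then Real.exp (-t) else 1) := by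
    have : ∀ j : β, (if P j then Real.exp (-t) else 1) =
        1 - (if P j then 1 else 0) * (1 - Real.exp (-t)) := by
      intro j; split_ifs <;> ring
    simp_rw [this]
    rw [Finset.sum_sub_distrib, ← Finset.sum_mul, Finset.sum_boole]
    simp
  rw [h1, Fintype.sum_pow]
  refine Finset.sum_congr rfl fun g _ => ?_
  rw [Finset.prod_ite, Finset.prod_const, Finset.prod_const_one, mul_one, ← Real.exp_nat_mul,
    mul_comm]

/-- Chernoff bound for the lower tail, as a count of the `k`-tuples with too few hits of `P`. -/
lemma chernoff_card {β : Type*} [Fintype β] (P : β → Prop) [DecidablePred P]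
    (s ε : ℝ) (hs : 0 < s) (hε : 0 < ε) (hε1 : ε < 1 / 100)
    (hP : s * (1 + ε) * (Fintype.card β : ℝ) ≤ ((univ.filter P).card : ℝ)) (k : ℕ) :
    ((univ.filter (fun g : Fin k → β =>
        ¬ s * (1 + ε / 2) * k ≤ ((univ.filter (fun a => P (g a))).card : ℝ))).card : ℝ) ≤
      Real.exp (-(s * ε ^ 2 / 32) * k) * (Fintype.card β : ℝ) ^ k := by
  set t : ℝ := ε / 4 with ht
  have ht0 : 0 < t := by positivity
  set m : ℝ := (Fintype.card β : ℝ)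
  have hm : 0 ≤ m := Nat.cast_nonneg _
  have hq : ((univ.filter P).card : ℝ) ≤ m := by
    exact Nat.cast_le.mpr (Finset.card_le_univ _)
  have hq0 : (0 : ℝ) ≤ ((univ.filter P).card : ℝ) := Nat.cast_nonneg _
  have he : t - t ^ 2 ≤ 1 - Real.exp (-t) := by
    have h1 : Real.exp (-t) * (1 + t) ≤ 1 := by
      calc Real.exp (-t) * (1 + t) ≤ Real.exp (-t) * Real.exp t := by
            gcongr; linarith [Real.add_one_le_exp t]
        _ = 1 := by rw [← Real.exp_add]; simp
    have h2 : (1 : ℝ) ≤ (1 - t + t ^ 2) * (1 + t) := by nlinarith [pow_pos ht0 3]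
    have h3 := le_of_mul_le_mul_right (h1.trans h2) (by linarith : (0 : ℝ) < 1 + t)
    linarith
  have he0 : 0 ≤ 1 - Real.exp (-t) := by
    linarith [Real.exp_le_one_iff.mpr (by linarith : -t ≤ 0)]
  have he1 := Real.exp_pos (-t)
  have hbase : m - ((univ.filter P).card : ℝ) * (1 - Real.exp (-t)) ≤
      m * Real.exp (-(s * (1 + ε) * (t - t ^ 2))) := by
    have h1 := Real.add_one_le_exp (-(s * (1 + ε) * (t - t ^ 2)))
    have h2 : s * (1 + ε) * m * (t - t ^ 2) ≤
        ((univ.filter P).card : ℝ) * (1 - Real.exp (-t)) :=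
      (mul_le_mul_of_nonneg_left he (by positivity)).trans
        (mul_le_mul_of_nonneg_right hP he0)
    nlinarith [mul_le_mul_of_nonneg_left h1 hm]
  have hbase0 : 0 ≤ m - ((univ.filter P).card : ℝ) * (1 - Real.exp (-t)) := by
    nlinarith
  -- Markov's inequality: each bad tuple contributes at least `exp(-t · s(1 + ε/2)k)` to the sum.
  have hmarkov : ((univ.filter (fun g : Fin k → β =>
        ¬ s * (1 + ε / 2) * k ≤ ((univ.filter (fun a => P (g a))).card : ℝ))).card : ℝ) *
        Real.exp (-t * (s * (1 + ε / 2) * k)) ≤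
      ∑ g : Fin k → β, Real.exp (-t * ((univ.filter (fun a => P (g a))).card : ℝ)) := by
    rw [← nsmul_eq_mul]
    refine (Finset.card_nsmul_le_sum _ _ _ fun g hg => ?_).trans
      (Finset.sum_le_sum_of_subset_of_nonneg (Finset.filter_subset _ _)
        fun _ _ _ => (Real.exp_pos _).le)
    have hg := not_le.mp (Finset.mem_filter.mp hg).2
    refine Real.exp_le_exp.mpr ?_
    nlinarith
  rw [sum_exp_count] at hmarkov
  refine le_of_mul_le_mul_right (hmarkov.trans ?_) (Real.exp_pos (-t * (s * (1 + ε / 2) * k)))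
  calc _ ≤ (m * Real.exp (-(s * (1 + ε) * (t - t ^ 2)))) ^ k := by gcongr
    _ = Real.exp (-(s * (1 + ε) * (t - t ^ 2)) * k) * m ^ k := by
        rw [mul_pow, ← Real.exp_nat_mul, mul_comm, mul_comm (k : ℝ)]
    _ ≤ Real.exp (-(s * ε ^ 2 / 32) * k + -t * (s * (1 + ε / 2) * k)) * m ^ k := by
        gcongr
        have h : -(s * (1 + ε) * (t - t ^ 2)) ≤
            -(s * ε ^ 2 / 32) + -t * (s * (1 + ε / 2)) := by
          rw [ht]
          nlinarith [mul_pos hs (pow_pos hε 2), mul_pos hs (pow_pos hε 3)]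
        nlinarith [mul_le_mul_of_nonneg_right h (Nat.cast_nonneg k : (0 : ℝ) ≤ k)]
    _ = _ := by rw [Real.exp_add]; ring

lemma two_rpow_le_one_sub_exp (c : ℝ) (hc : 0 < c) (k : ℕ) (hk : 0 < k)
    (hck : 4 ≤ c ^ 2 * k) :
    (2 : ℝ) ^ (-(1 / (k : ℝ))) ≤ 1 - Real.exp (-c * k) := by
  have hk0 : (0 : ℝ) < k := by exact_mod_cast hk
  have h1 : 1 + 2 * (k : ℝ) ≤ Real.exp (c * k) := by
    have := Real.quadratic_le_exp_of_nonneg (by positivity : 0 ≤ c * (k : ℝ))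
    nlinarith [mul_le_mul_of_nonneg_right hck hk0.le, mul_pos hc hk0]
  have h2 : Real.exp (-c * k) ≤ 1 / (1 + 2 * (k : ℝ)) := by
    rw [neg_mul, Real.exp_neg, ← one_div]
    exact one_div_le_one_div_of_le (by positivity) h1
  -- `log 2 ≥ 1/2` and `exp x ≥ 1 + x` give `2^(1/k) ≥ 1 + 1/(2k)`.
  have h3 : 1 + 1 / (2 * (k : ℝ)) ≤ (2 : ℝ) ^ (1 / (k : ℝ)) := by
    rw [Real.rpow_def_of_pos two_pos]
    have hl : (1 : ℝ) / 2 ≤ Real.log 2 := by linarith [Real.log_two_gt_d9]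
    have := Real.add_one_le_exp (Real.log 2 * (1 / (k : ℝ)))
    have h4 : 1 / (2 * (k : ℝ)) ≤ Real.log 2 * (1 / (k : ℝ)) := by
      calc 1 / (2 * (k : ℝ)) = 1 / 2 * (1 / k) := by field_simp
        _ ≤ _ := by gcongr
    linarith
  have h5 : (2 : ℝ) ^ (-(1 / (k : ℝ))) ≤ 1 / (1 + 1 / (2 * (k : ℝ))) := by
    rw [Real.rpow_neg two_pos.le, ← one_div]
    exact one_div_le_one_div_of_le (by positivity) h3
  have h6 : 1 / (1 + 1 / (2 * (k : ℝ))) = 1 - 1 / (1 + 2 * (k : ℝ)) := by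
    field_simp
    ring
  linarith

/-- Independence: the probability that all `n` coordinates satisfy `Q` is the `n`-th power of the
probability for one coordinate. -/
lemma prob_forall {γ : Type*} [Fintype γ] (n : ℕ) (Q : γ → Prop) :
    prob (Ω := Fin n → γ) (fun S => ∀ i, Q (S i)) = prob Q ^ n := by
  classical
  unfold prob
  have : (univ.filter (fun S : Fin n → γ => ∀ i, Q (S i))) =
      Fintype.piFinset (fun _ => univ.filter Q) := by
    ext S; simp
  rw [div_pow]
  congr 1
  · have hcard := congrArg Finset.card this
    rw [Fintype.card_piFinset_const] at hcard
    rw [← Nat.cast_pow]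
    refine congrArg Nat.cast ?_
    convert hcard
  · simp

open Classical in
theorem stmt_10 :
    ∀ s ε : ℝ, s ∈ Set.Ioo (0 : ℝ) 1 → ε ∈ Set.Ioo (0 : ℝ) (1 / 100) →
      ∃ k₀ : ℕ, 0 < k₀ ∧
        ∀ k : ℕ, k₀ ≤ k → ∀ n m : ℕ, 0 < n → 0 < m →
          ∀ C : Fin m → (Fin n → Bool) → Bool,
            ∀ xstar : Fin n → Bool,
              s * (1 + ε) * m ≤
                  ((univ.filter (fun j : Fin m => C j xstar = true)).card : ℝ) →
              (2 : ℝ) ^ (-((n : ℝ) / (k : ℝ))) ≤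
                prob (Ω := Fin n → Fin k → Fin m)
                  (fun S =>
                    ∀ i : Fin n,
                      s * (1 + ε / 2) * k ≤
                        ((univ.filter
                          (fun a : Fin k => C (S i a) xstar = true)).card : ℝ)) := by
  intro s ε hs hε
  set c : ℝ := s * ε ^ 2 / 32 with hc
  have hs0 := hs.1
  have hε0 := hε.1
  have hc0 : 0 < c := by positivity
  refine ⟨⌈4 / c ^ 2⌉₊ + 1, Nat.succ_pos _, ?_⟩
  intro k hk n m _ hm C xstar hC
  have hk0 : 0 < k := by omega
  have hck : 4 ≤ c ^ 2 * k := by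
    have h1 : 4 / c ^ 2 ≤ (k : ℝ) :=
      (Nat.le_ceil _).trans (by exact_mod_cast (by omega : ⌈4 / c ^ 2⌉₊ ≤ k))
    rw [div_le_iff₀ (by positivity)] at h1
    linarith
  have hm0 : (0 : ℝ) < m := by exact_mod_cast hm
  rw [prob_forall n (fun g : Fin k → Fin m => s * (1 + ε / 2) * k ≤
    ((univ.filter (fun a : Fin k => C (g a) xstar = true)).card : ℝ))]
  have hpow : (2 : ℝ) ^ (-((n : ℝ) / (k : ℝ))) = ((2 : ℝ) ^ (-(1 / (k : ℝ)))) ^ n := by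
    rw [← Real.rpow_mul_natCast two_pos.le]
    congr 1
    ring
  rw [hpow]
  refine pow_le_pow_left₀ (by positivity) ?_ n
  refine (two_rpow_le_one_sub_exp c hc0 k hk0 hck).trans ?_
  have hch := chernoff_card (fun j : Fin m => C j xstar = true) s ε hs0 hε0 hε.2
    (by simpa using hC) k
  have hsplit := Finset.card_filter_add_card_filter_not (s := (univ : Finset (Fin k → Fin m)))
    (fun g : Fin k → Fin m => s * (1 + ε / 2) * k ≤
      ((univ.filter (fun a : Fin k => C (g a) xstar = true)).card : ℝ))
  have hsplit' := congrArg (Nat.cast : ℕ → ℝ) hsplit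
  unfold prob
  simp only [Finset.card_univ, Fintype.card_fun, Fintype.card_fin, Nat.cast_add,
    Nat.cast_pow] at hsplit' hch ⊢
  rw [le_div_iff₀ (by positivity), sub_mul, one_mul]
  rw [sub_le_iff_le_add, ← hsplit']
  rw [← hsplit'] at hch
  convert add_le_add_right hch _ using 1
end

section
/- Let s ∈ (0,1) and ε ∈ (0, 1/100) with s(1 + ε) ≤ 1, let n, m, M, K, D be positive integers, let C₁, …, C_m : {0,1}^n → {0,1} be Boolean functions, and let x ∈ {0,1}^n be an assignment with #{j : C_j(x) = 1} ≥ s(1 + ε)·m. Let S₁, …, S_M be subsets of {1,…,M}, each of cardinality exactly K, such that each S_i has nonempty intersection with at most D of the sets S_j with j ≠ i. Let L : {1,…,M} → {1,…,m} be chosen by picking each value L(a) independently and uniformly at random from {1,…,m}, and define B_i = 1 iff #{a ∈ S_i : C_{L(a)}(x) = 1} ≥ s(1 + ε/2)·K. If e·(D + 1)·exp(−ε²·s·K/18) ≤ 1, then the probability that B_i = 1 for all i ∈ {1,…,M} is at least (1 − 1/D)^M. -/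
/-!
Each event `B_i = 0` is a lower-tail event for a sum of `K` independent Bernoulli variables of mean
at least `s (1 + ε)`. The exponential moment method with parameter `ε / 4` bounds its probability
by `exp (-ε² s K / 18)` (`chernoff`).

Two events determined by disjoint sets of coordinates of `L` are independent (`prob_indep`): swapping
those coordinates between two samples is an involution of `Ω × Ω`. Hence the event `B_i = 0` is
independent of any combination of the events `B_j = 0` with `S_i ∩ S_j = ∅`. The symmetric local lemma
in product form (`local_lemma`), with weight `1 / (D + 1)` on every event, then gives the lower bound
`(1 - 1 / (D + 1)) ^ M ≥ (1 - 1 / D) ^ M`. Its numerical hypothesis follows from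
`(1 + 1 / D) ^ D ≤ e`.
-/

open Finset

/-! ### Uniform probability and independence -/

section Prob

variable {Ω : Type*} [Fintype Ω]

lemma prob_nonneg (E : Ω → Prop) : 0 ≤ prob E := by
  unfold prob; positivity

lemma prob_mono_s12 {E F : Ω → Prop} (h : ∀ L, E L → F L) : prob E ≤ prob F := by
  classical
  unfold prob
  exact div_le_div_of_nonneg_right (Nat.cast_le.2 (Finset.card_le_card fun L hL =>
    Finset.mem_filter.2 ⟨mem_univ _, h L (Finset.mem_filter.1 hL).2⟩)) (Nat.cast_nonneg _)

lemma prob_split (E F : Ω → Prop) :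
    prob F = prob (fun L => E L ∧ F L) + prob (fun L => ¬ E L ∧ F L) := by
  classical
  unfold prob
  rw [← add_div]
  congr 1
  norm_cast
  rw [← Finset.card_filter_add_card_filter_not (s := univ.filter F) E, Finset.filter_filter,
    Finset.filter_filter]
  congr 2 <;> (ext L; simp only [mem_filter, mem_univ, true_and]; exact and_comm)

lemma prob_true [Nonempty Ω] {E : Ω → Prop} (h : ∀ L, E L) : prob E = 1 := by
  classical
  unfold prob
  rw [Finset.filter_true_of_mem (fun L _ => h L), Finset.card_univ]
  exact div_self (by exact_mod_cast Fintype.card_ne_zero)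

end Prob

/-- Events determined by the coordinates in `S`, respectively outside `S`, are independent: the
exchange of the coordinates in `S` is a bijection from the pairs `(L, L')` with `E L` and `F L` to
those with `E L'` and `F L`. -/
lemma prob_indep {ι α : Type*} [Fintype ι] [DecidableEq ι] [Fintype α] [Nonempty α]
    (S : Finset ι) (E F : (ι → α) → Prop)
    (hE : ∀ L L', (∀ a ∈ S, L a = L' a) → (E L ↔ E L'))
    (hF : ∀ L L', (∀ a, a ∉ S → L a = L' a) → (F L ↔ F L')) :
    prob (fun L => E L ∧ F L) = prob E * prob F := by
  classical
  have key : (univ.filter (fun L => E L ∧ F L)).card * Fintype.card (ι → α)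
      = (univ.filter E).card * (univ.filter F).card := by
    rw [← Finset.card_univ, ← Finset.card_product, ← Finset.card_product]
    refine Finset.card_bij' (fun p _ => (S.piecewise p.1 p.2, S.piecewise p.2 p.1))
      (fun p _ => (S.piecewise p.1 p.2, S.piecewise p.2 p.1)) ?_ ?_ ?_ ?_
    · rintro ⟨L, L'⟩ h
      simp only [mem_product, mem_filter, mem_univ, true_and, and_true] at h ⊢
      refine ⟨(hE _ _ fun a ha => ?_).1 h.1, (hF _ _ fun a ha => ?_).1 h.2⟩ <;> simp [ha]
    · rintro ⟨L, L'⟩ h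
      simp only [mem_product, mem_filter, mem_univ, true_and, and_true] at h ⊢
      refine ⟨(hE _ _ fun a ha => ?_).1 h.1, (hF _ _ fun a ha => ?_).1 h.2⟩ <;> simp [ha]
    · rintro ⟨L, L'⟩ -
      ext a <;> by_cases ha : a ∈ S <;> simp [ha]
    · rintro ⟨L, L'⟩ -
      ext a <;> by_cases ha : a ∈ S <;> simp [ha]
  have hc : (Fintype.card (ι → α) : ℝ) ≠ 0 := by exact_mod_cast Fintype.card_ne_zero
  unfold prob
  rw [div_mul_div_comm, div_eq_div_iff hc (mul_ne_zero hc hc), ← mul_assoc]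
  congr 1
  norm_cast
  convert key

/-! ### The local lemma -/

section LocalLemma

variable {Ω ι : Type*} [Fintype Ω] [DecidableEq ι]

lemma prob_insert (A : ι → Ω → Prop) (i : ι) (T : Finset ι) :
    prob (fun L => ∀ j ∈ T, ¬ A j L) = prob (fun L => A i L ∧ ∀ j ∈ T, ¬ A j L)
      + prob (fun L => ∀ j ∈ insert i T, ¬ A j L) := by
  rw [prob_split (A i)]
  simp only [Finset.forall_mem_insert]

/-- The inductive core of the local lemma: conditionally on avoiding all the events of `T`, another
event has probability at most `y`. Conditional probabilities are avoided by multiplying out. -/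
lemma local_lemma_aux (A : ι → Ω → Prop) (N : ι → Finset ι) (d : ℕ) (q y : ℝ)
    (hN : ∀ i, (N i).card ≤ d) (hy0 : 0 ≤ y) (hy1 : y ≤ 1) (hq : q ≤ y * (1 - y) ^ d)
    (hind : ∀ i T, i ∉ T → Disjoint T (N i) →
      prob (fun L => A i L ∧ ∀ j ∈ T, ¬ A j L) ≤ q * prob (fun L => ∀ j ∈ T, ¬ A j L)) :
    ∀ (k : ℕ) (T : Finset ι), T.card = k → ∀ i ∉ T,
      prob (fun L => A i L ∧ ∀ j ∈ T, ¬ A j L) ≤ y * prob (fun L => ∀ j ∈ T, ¬ A j L) := by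
  intro k
  induction k using Nat.strong_induction_on with
  | _ k ih =>
    intro T hT i hi
    -- `T ∩ N i` consists of the neighbours of `i`, `T \ N i` of the events independent of it.
    have chain : ∀ U : Finset ι, U ⊆ T ∩ N i →
        (1 - y) ^ U.card * prob (fun L => ∀ j ∈ T \ N i, ¬ A j L)
          ≤ prob (fun L => ∀ j ∈ U ∪ (T \ N i), ¬ A j L) := by
      intro U
      induction U using Finset.induction_on with
      | empty => intro _; simp
      | insert u U hu ihU =>
        intro hUT
        have h1 := ihU ((Finset.subset_insert _ _).trans hUT)
        have huT : u ∈ T ∩ N i := hUT (Finset.mem_insert_self _ _)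
        have hunot : u ∉ U ∪ (T \ N i) := by
          simp only [mem_union, mem_sdiff, mem_inter] at huT ⊢
          tauto
        have hsub : U ∪ (T \ N i) ⊆ T := Finset.union_subset
          (((Finset.subset_insert _ _).trans hUT).trans Finset.inter_subset_left)
          Finset.sdiff_subset
        have hlt : (U ∪ (T \ N i)).card < k := by
          rw [← hT]
          refine Finset.card_lt_card ⟨hsub, fun h => hunot (h (Finset.mem_inter.1 huT).1)⟩
        have h2 := ih _ hlt _ rfl u hunot
        have h3 := prob_insert A u (U ∪ (T \ N i))
        rw [Finset.insert_union, Finset.card_insert_of_notMem hu, pow_succ]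
        have h4 := mul_le_mul_of_nonneg_left h1 (sub_nonneg.2 hy1)
        linarith
    have h1 := chain _ subset_rfl
    have hU : T ∩ N i ∪ T \ N i = T := by
      rw [Finset.union_comm]; exact Finset.sdiff_union_inter T (N i)
    rw [hU] at h1
    have hG := prob_nonneg (fun L => ∀ j ∈ T \ N i, ¬ A j L)
    have hpow : (1 - y) ^ d ≤ (1 - y) ^ (T ∩ N i).card :=
      pow_le_pow_of_le_one (by linarith) (by linarith)
        ((Finset.card_le_card Finset.inter_subset_right).trans (hN i))
    calc prob (fun L => A i L ∧ ∀ j ∈ T, ¬ A j L)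
        ≤ prob (fun L => A i L ∧ ∀ j ∈ T \ N i, ¬ A j L) :=
          prob_mono_s12 fun L h => ⟨h.1, fun j hj => h.2 j (Finset.mem_sdiff.1 hj).1⟩
      _ ≤ q * prob (fun L => ∀ j ∈ T \ N i, ¬ A j L) :=
          hind i _ (fun h => hi (Finset.mem_sdiff.1 h).1) Finset.sdiff_disjoint
      _ ≤ (y * (1 - y) ^ (T ∩ N i).card) * prob (fun L => ∀ j ∈ T \ N i, ¬ A j L) := by
          apply mul_le_mul_of_nonneg_right _ hG
          exact hq.trans (mul_le_mul_of_nonneg_left hpow hy0)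
      _ ≤ y * prob (fun L => ∀ j ∈ T, ¬ A j L) := by
          rw [mul_assoc]; exact mul_le_mul_of_nonneg_left h1 hy0

/-- Symmetric Lovász local lemma on a finite uniform probability space, in quantitative form. The
hypothesis `hind` encodes that `A i` has probability at most `q` and is mutually independent of the
events outside its neighbourhood `N i`. -/
lemma local_lemma [Nonempty Ω] (A : ι → Ω → Prop) (N : ι → Finset ι) (d : ℕ) (q y : ℝ)
    (hN : ∀ i, (N i).card ≤ d) (hy0 : 0 ≤ y) (hy1 : y ≤ 1) (hq : q ≤ y * (1 - y) ^ d)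
    (hind : ∀ i T, i ∉ T → Disjoint T (N i) →
      prob (fun L => A i L ∧ ∀ j ∈ T, ¬ A j L) ≤ q * prob (fun L => ∀ j ∈ T, ¬ A j L))
    (T : Finset ι) :
    (1 - y) ^ T.card ≤ prob (fun L => ∀ j ∈ T, ¬ A j L) := by
  induction T using Finset.induction_on with
  | empty => rw [prob_true (by simp)]; simp
  | insert u U hu ihU =>
    have h2 := local_lemma_aux A N d q y hN hy0 hy1 hq hind _ U rfl u hu
    have h3 := prob_insert A u U
    rw [Finset.card_insert_of_notMem hu, pow_succ]
    have h4 := mul_le_mul_of_nonneg_left ihU (sub_nonneg.2 hy1)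
    linarith

end LocalLemma

/-! ### The Chernoff bound -/

/-- Exponential moment of the number of `a ∈ S` for which `L a` satisfies `g`. -/
lemma sum_exp_eq {M m : ℕ} (S : Finset (Fin M)) (g : Fin m → Prop) [DecidablePred g] (t : ℝ) :
    ∑ L : Fin M → Fin m, Real.exp (-t * ((S.filter (fun a => g (L a))).card : ℝ))
      = (∑ j : Fin m, if g j then Real.exp (-t) else 1) ^ S.card * (m : ℝ) ^ (M - S.card) := by
  have h1 : ∀ L : Fin M → Fin m,
      Real.exp (-t * ((S.filter (fun a => g (L a))).card : ℝ))
        = ∏ a, (if a ∈ S then (if g (L a) then Real.exp (-t) else 1) else 1) := by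
    intro L
    rw [Finset.prod_ite_mem, Finset.univ_inter, ← Finset.prod_filter, Finset.prod_const,
      ← Real.exp_nat_mul, mul_comm]
  simp_rw [h1]
  rw [← Fintype.piFinset_univ, ← Finset.prod_univ_sum (fun _ : Fin M => (univ : Finset (Fin m)))
    (fun a j => if a ∈ S then (if g j then Real.exp (-t) else 1) else (1 : ℝ))]
  rw [← Finset.prod_mul_prod_compl S]
  congr 1
  · rw [Finset.prod_congr rfl (g := fun _ => ∑ j : Fin m, if g j then Real.exp (-t) else 1),
      Finset.prod_const]
    intro a ha
    simp [ha]
  · rw [Finset.prod_congr rfl (g := fun _ => (m : ℝ)), Finset.prod_const, Finset.card_compl,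
      Fintype.card_fin]
    intro a ha
    simp [Finset.mem_compl.1 ha]

/-- Chernoff bound for the lower tail: `18` leaves room for the crude estimate
`exp (-t) ≤ 1 - t + t ^ 2` at `t = ε / 4`. -/
lemma chernoff {M m : ℕ} (s ε : ℝ) (hs : 0 < s) (hε0 : 0 < ε) (hε1 : ε < 1 / 100) (hm : 0 < m)
    (S : Finset (Fin M)) (g : Fin m → Prop) [DecidablePred g]
    (hg : s * (1 + ε) * m ≤ ((univ.filter g).card : ℝ)) :
    prob (fun L : Fin M → Fin m =>
      ((S.filter (fun a => g (L a))).card : ℝ) < s * (1 + ε / 2) * S.card)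
      ≤ Real.exp (-(ε ^ 2 * s * S.card) / 18) := by
  classical
  set K := S.card with hK
  have hKM : K ≤ M := by simpa using Finset.card_le_univ S
  set c : ℝ := s * (1 + ε / 2) * K with hc
  set t : ℝ := ε / 4 with ht
  have hm' : (0 : ℝ) < m := by exact_mod_cast hm
  have markov : ((univ.filter (fun L : Fin M → Fin m =>
      ((S.filter (fun a => g (L a))).card : ℝ) < c)).card : ℝ)
      ≤ Real.exp (t * c) *
        ∑ L : Fin M → Fin m, Real.exp (-t * ((S.filter (fun a => g (L a))).card : ℝ)) := by
    rw [Finset.mul_sum, Finset.card_filter, Nat.cast_sum]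
    refine Finset.sum_le_sum fun L _ => ?_
    rw [← Real.exp_add]
    split_ifs with h
    · rw [Nat.cast_one]
      apply Real.one_le_exp
      have : 0 < t := by positivity
      nlinarith
    · rw [Nat.cast_zero]; positivity
  have hexp : Real.exp (-t) ≤ 1 - t + t ^ 2 := by
    have h := Real.abs_exp_sub_one_sub_id_le (x := -t)
      (by rw [abs_neg, abs_of_pos (by positivity)]; linarith)
    have := (abs_le.1 h).2
    nlinarith
  have hone : (∑ j : Fin m, if g j then Real.exp (-t) else 1)
      ≤ m * Real.exp (-(s * (1 + ε) * (t - t ^ 2))) := by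
    have e1 : (∑ j : Fin m, if g j then Real.exp (-t) else (1 : ℝ))
        = m - (univ.filter g).card * (1 - Real.exp (-t)) := by
      have : ∀ j : Fin m, (if g j then Real.exp (-t) else (1 : ℝ))
          = 1 - (if g j then 1 else 0) * (1 - Real.exp (-t)) := by
        intro j; split_ifs <;> ring
      simp_rw [this, Finset.sum_sub_distrib, ← Finset.sum_mul, Finset.sum_boole]
      simp
    have e2 : (s * (1 + ε) * m) * (t - t ^ 2)
        ≤ (univ.filter g).card * (1 - Real.exp (-t)) := by
      apply mul_le_mul hg (by linarith) _ (by positivity)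
      nlinarith
    have e3 := Real.add_one_le_exp (-(s * (1 + ε) * (t - t ^ 2)))
    have e4 := mul_le_mul_of_nonneg_left e3 hm'.le
    rw [e1]
    linarith
  have hnn : 0 ≤ (∑ j : Fin m, if g j then Real.exp (-t) else (1 : ℝ)) :=
    Finset.sum_nonneg fun j _ => by split_ifs <;> positivity
  have hfin : t * c + K * (-(s * (1 + ε) * (t - t ^ 2))) ≤ -(ε ^ 2 * s * K) / 18 := by
    have : -(ε ^ 2 * s * K) / 18 - (t * c + K * (-(s * (1 + ε) * (t - t ^ 2))))
        = (s * K * ε ^ 2) * ((1 - ε) / 16 - 1 / 18) := by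
      rw [hc, ht]; ring
    have h2 : 0 ≤ (s * K * ε ^ 2) * ((1 - ε) / 16 - 1 / 18) :=
      mul_nonneg (by positivity) (by linarith)
    linarith
  unfold prob
  rw [Fintype.card_fun, Fintype.card_fin, Fintype.card_fin, Nat.cast_pow,
    div_le_iff₀ (by positivity)]
  refine le_trans (le_of_eq_of_le (by congr!) markov) ?_
  rw [sum_exp_eq]
  calc Real.exp (t * c) * ((∑ j : Fin m, if g j then Real.exp (-t) else 1) ^ S.card
        * (m : ℝ) ^ (M - S.card))
      ≤ Real.exp (t * c) * ((m * Real.exp (-(s * (1 + ε) * (t - t ^ 2)))) ^ K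
        * (m : ℝ) ^ (M - K)) := by
        gcongr
    _ = Real.exp (t * c + K * (-(s * (1 + ε) * (t - t ^ 2)))) * (m : ℝ) ^ M := by
        rw [mul_pow, ← Real.exp_nat_mul, Real.exp_add, ← Nat.add_sub_of_le hKM, pow_add,
          Nat.add_sub_cancel_left]
        ring
    _ ≤ _ := by gcongr

/-! ### Combination -/

/-- The local lemma condition `e (D + 1) q ≤ 1` in its polynomial form. -/
lemma lll_condition (D : ℕ) (hD : 0 < D) (q : ℝ) (h : Real.exp 1 * ((D : ℝ) + 1) * q ≤ 1) :
    q ≤ 1 / ((D : ℝ) + 1) * (1 - 1 / ((D : ℝ) + 1)) ^ D := by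
  have hD' : (0 : ℝ) < D := by exact_mod_cast hD
  have h1 : (1 + 1 / (D : ℝ)) ^ D ≤ Real.exp 1 := by
    have := Real.add_one_le_exp (1 / (D : ℝ))
    calc (1 + 1 / (D : ℝ)) ^ D ≤ (Real.exp (1 / D)) ^ D := by gcongr; linarith
      _ = Real.exp 1 := by rw [← Real.exp_nat_mul]; congr 1; field_simp
  have h2 : 1 - 1 / ((D : ℝ) + 1) = (1 + 1 / (D : ℝ))⁻¹ := by field_simp; ring
  have h3 : (Real.exp 1)⁻¹ ≤ (1 - 1 / ((D : ℝ) + 1)) ^ D := by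
    rw [h2, inv_pow]
    exact inv_anti₀ (by positivity) h1
  calc q ≤ 1 / ((D : ℝ) + 1) * (Real.exp 1)⁻¹ := by
        rw [one_div, ← mul_inv, ← one_div, le_div_iff₀ (by positivity)]
        linarith
    _ ≤ _ := by gcongr

open Classical in
theorem stmt_12 (s ε : ℝ) (hs : s ∈ Set.Ioo (0 : ℝ) 1) (hε : ε ∈ Set.Ioo (0 : ℝ) (1 / 100))
    (hse : s * (1 + ε) ≤ 1)
    (n m M K D : ℕ) (hn : 0 < n) (hm : 0 < m) (hM : 0 < M) (hK : 0 < K) (hD : 0 < D)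
    (C : Fin m → (Fin n → Bool) → Bool) (x : Fin n → Bool)
    (hx : s * (1 + ε) * m ≤ ((univ.filter (fun j : Fin m => C j x = true)).card : ℝ))
    (S : Fin M → Finset (Fin M))
    (hcard : ∀ i, (S i).card = K)
    (hinter : ∀ i, (univ.filter (fun j : Fin M => j ≠ i ∧ (S i ∩ S j).Nonempty)).card ≤ D)
    (hlll : Real.exp 1 * ((D : ℝ) + 1) * Real.exp (-(ε ^ 2 * s * K) / 18) ≤ 1) :
    ((1 : ℝ) - 1 / D) ^ M ≤
      prob (Ω := Fin M → Fin m)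
        (fun L =>
          ∀ i : Fin M,
            s * (1 + ε / 2) * K ≤
              (((S i).filter (fun a => C (L a) x = true)).card : ℝ)) := by
  have hD' : (1 : ℝ) ≤ D := by exact_mod_cast hD
  have : Nonempty (Fin m) := ⟨⟨0, hm⟩⟩
  set A : Fin M → (Fin M → Fin m) → Prop := fun i L =>
    (((S i).filter (fun a => C (L a) x = true)).card : ℝ) < s * (1 + ε / 2) * K with hA
  have hdep : ∀ i L L', (∀ a ∈ S i, L a = L' a) → (A i L ↔ A i L') := by
    intro i L L' h
    have : (S i).filter (fun a => C (L a) x = true) = (S i).filter (fun a => C (L' a) x = true) :=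
      Finset.filter_congr fun a ha => by rw [h a ha]
    simp only [hA, this]
  have hprob : ∀ i, prob (A i) ≤ Real.exp (-(ε ^ 2 * s * K) / 18) := by
    intro i
    have := chernoff s ε hs.1 hε.1 hε.2 hm (S i) (fun j => C j x = true) hx
    rwa [hcard i] at this
  have hy1 : 1 / ((D : ℝ) + 1) ≤ 1 := by
    rw [div_le_one (by positivity)]; linarith
  have main := local_lemma A
    (fun i => univ.filter (fun j : Fin M => j ≠ i ∧ (S i ∩ S j).Nonempty)) D
    (Real.exp (-(ε ^ 2 * s * K) / 18)) (1 / ((D : ℝ) + 1)) hinter (by positivity) hy1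
    (lll_condition D hD _ hlll) (by
      intro i T hi hT
      rw [prob_indep (S i) (A i) (fun L => ∀ j ∈ T, ¬ A j L) (hdep i)]
      · exact mul_le_mul_of_nonneg_right (hprob i) (prob_nonneg _)
      · intro L L' h
        refine forall₂_congr fun j hj => not_congr (hdep j L L' fun a ha => h a fun hai => ?_)
        refine Finset.disjoint_left.1 hT hj (Finset.mem_filter.2 ⟨mem_univ _, ?_, a, ?_⟩)
        · rintro rfl; exact hi hj
        · exact Finset.mem_inter.2 ⟨hai, ha⟩) univ
  rw [Finset.card_univ, Fintype.card_fin] at main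
  have hfin : ((1 : ℝ) - 1 / D) ^ M ≤ (1 - 1 / ((D : ℝ) + 1)) ^ M := by
    apply pow_le_pow_left₀
    · rw [sub_nonneg, div_le_one (by positivity)]; exact hD'
    · gcongr; linarith
  refine hfin.trans (main.trans (prob_mono_s12 fun L h i => ?_))
  exact not_lt.1 (h i (mem_univ _))
end
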